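/- arXiv:math/9802083 — 2 statements merged into one kernel-verified Lean document; each statement's English description precedes it below -/
import Mathlib

section
/- For every integer n ≥ 1 and all real numbers q, q' > 1, the concrete quantum projective space C*-algebras B_n(q) and B_n(q') are isomorphic as unital C*-algebras, i.e. there exists a unital star-algebra isomorphism (automatically isometric) B_n(q) ≅ B_n(q'). In particular the C*-algebra C(ℂP_q^n) of the standard quantum complex projective space is independent of q. -/
noncomputable section

/-- The Hilbert space `H_n = ℓ²(ℕⁿ)`. -/
abbrev Hn (n : ℕ) : Type := lp (fun _ : (Fin n → ℕ) => ℂ) 2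

/-- The standard orthonormal basis vectors `e_k`, `k ∈ ℕⁿ`, of `ℓ²(ℕⁿ)`. -/
def en {n : ℕ} (k : Fin n → ℕ) : Hn n := lp.single 2 k 1

/-- For an index `j` with `1 ≤ j+1 ≤ n` (so `w_{j+2} = γ^{⊗(n-1-j)} ⊗ α* ⊗ 1^{⊗j}`),
the (0-based) coordinate `n - 1 - j` at which the shift `α*` acts. -/
def shiftIdx {n : ℕ} (j : Fin n) : Fin n := ⟨n - 1 - (j : ℕ), by have := j.isLt; omega⟩

/-- `IsWFamily q w` says that `w 0, …, w n` are the operators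
`w_1, …, w_{n+1}` on `ℓ²(ℕⁿ)` from the paper (for the parameter `q`):
`w_1 e_k = q^{-(k_1+⋯+k_n)} e_k` and for `2 ≤ i ≤ n+1`,
`w_i e_k = q^{-(k_1+⋯+k_{n+1-i})} (1-q^{-2(k_{n+2-i}+1)})^{1/2} e_{k+δ_{n+2-i}}`.
These are the images of the generators `u_{n+1,i}` of `C(S_q^{2n+1})` (up to a circle
factor) under the faithful representation `π_{n(n-1)⋯21}∘Δ^{n-1}`. -/
def IsWFamily (q : ℝ) {n : ℕ} (w : Fin (n + 1) → (Hn n →L[ℂ] Hn n)) : Prop :=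
  (∀ k : Fin n → ℕ, w 0 (en k) = (q ^ (-(∑ m, (k m : ℤ)))) • en k) ∧
  (∀ (j : Fin n) (k : Fin n → ℕ),
    w j.succ (en k) =
      ((q ^ (-(∑ m ∈ Finset.univ.filter (fun m : Fin n => (m : ℕ) < n - 1 - (j : ℕ)), (k m : ℤ)))) *
          Real.sqrt (1 - q ^ (-2 * ((k (shiftIdx j) : ℤ) + 1)))) •
        en (Function.update k (shiftIdx j) (k (shiftIdx j) + 1)))

/-- `B_n(q)`: the unital C*-subalgebra of bounded operators on `ℓ²(ℕⁿ)` generated by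
`{w_i* w_j : 1 ≤ i, j ≤ n+1}` (the closed star-subalgebra they generate); this is the
concrete realization of the standard quantum projective space algebra `C(ℂP_q^n)`. -/
def projAlg {n : ℕ} (w : Fin (n + 1) → (Hn n →L[ℂ] Hn n)) :
    StarSubalgebra ℂ (Hn n →L[ℂ] Hn n) :=
  (StarAlgebra.adjoin ℂ
    {x : Hn n →L[ℂ] Hn n | ∃ i j : Fin (n + 1), x = star (w i) * w j}).topologicalClosure

/-!
Each `w i` is an isometry `v i` shifting basis vectors, which does not depend on `q`, times a
positive diagonal operator. For all `q` simultaneously, the diagonal factors are values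
`φ (a i)` of one representation `φ` of `C(X)`, where `X` is the compact space of antitone tuples
`∞ ≥ x 0 ≥ ⋯ ≥ x n` and the basis vector `e k` corresponds to the tuple of partial sums of `k`.

The functions `|a i|²` separate the points of `X`, so by Stone–Weierstrass the operators
`(w i)* (w i) = φ (|a i|²)` already generate `φ (C(X))`. Moreover `a i` vanishes exactly where
`x i = ∞`. Functions with the same zeros on a compact space generate the same closed ideal, so for
another parameter `q'` the operator `w' i` is a limit of elements `w i φ (g)`, and
`(w' i)* (w' j)` belongs to the algebra generated by the `(w i)* (w j)`. By symmetry, the two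
algebras are equal as subalgebras of the operators on `ℓ²(ℕⁿ)`.
-/

namespace QuantumProjectiveSpace

open scoped lp CStarAlgebra

section GramAlgebra

variable {ι A X : Type*} [CStarAlgebra A] [TopologicalSpace X] [CompactSpace X]

/-- The unital C*-algebra generated by the entries `(w i)* (w j)` of the Gram matrix of a family
in a C*-algebra. For the operators on `Hn n` this is `projAlg`. -/
def gramAlgebra (w : ι → A) : StarSubalgebra ℂ A :=
  (StarAlgebra.adjoin ℂ {x : A | ∃ i j, x = star (w i) * w j}).topologicalClosure

theorem isClosed_gramAlgebra (w : ι → A) : IsClosed (gramAlgebra w : Set A) :=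
  StarSubalgebra.isClosed_topologicalClosure _

theorem star_mul_mem_gramAlgebra (w : ι → A) (i j : ι) : star (w i) * w j ∈ gramAlgebra w :=
  StarSubalgebra.le_topologicalClosure _ (StarAlgebra.subset_adjoin ℂ _ ⟨i, j, rfl⟩)

theorem gramAlgebra_le {w : ι → A} {B : StarSubalgebra ℂ A} (hB : IsClosed (B : Set A))
    (h : ∀ i j, star (w i) * w j ∈ B) : gramAlgebra w ≤ B := by
  refine StarSubalgebra.topologicalClosure_minimal (StarAlgebra.adjoin_le ?_) hB
  rintro _ ⟨i, j, rfl⟩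
  exact h i j

theorem star_mul_mem_of_mem_closure {B : StarSubalgebra ℂ A} (hB : IsClosed (B : Set A))
    {a b a' b' : A} (hab : star a * b ∈ B) (ha' : a' ∈ closure ((a * ·) '' (B : Set A)))
    (hb' : b' ∈ closure ((b * ·) '' (B : Set A))) : star a' * b' ∈ B := by
  have hcont : Continuous fun p : A × A ↦ star p.1 * p.2 := by fun_prop
  rw [← SetLike.mem_coe, ← hB.closure_eq]
  refine map_mem_closure₂ (f := fun s t ↦ star s * t) hcont ha' hb' ?_
  rintro _ ⟨c, hc, rfl⟩ _ ⟨d, hd, rfl⟩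
  have regroup : star (a * c) * (b * d) = star c * (star a * b) * d := by
    simp only [star_mul, mul_assoc]
  exact regroup ▸ mul_mem (mul_mem (star_mem hc) hab) hd

theorem map_mem_of_separatesPoints (φ : C(X, ℂ) →⋆ₐ[ℂ] A) {B : StarSubalgebra ℂ A}
    (hB : IsClosed (B : Set A)) {s : Set C(X, ℂ)} (hs : ∀ f ∈ s, φ f ∈ B)
    (hsep : ∀ ⦃x y⦄, x ≠ y → ∃ f ∈ s, f x ≠ f y) (g : C(X, ℂ)) : φ g ∈ B := by
  have sep : (B.comap φ).SeparatesPoints := fun x y hxy ↦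
    let ⟨f, hf, hfxy⟩ := hsep hxy
    ⟨f, ⟨f, hs f hf, rfl⟩, hfxy⟩
  have closed : IsClosed (B.comap φ : Set C(X, ℂ)) := hB.preimage (map_continuous φ)
  have dense := ContinuousMap.starSubalgebra_topologicalClosure_eq_top_of_separatesPoints _ sep
  have top_le : ⊤ ≤ B.comap φ := dense ▸ StarSubalgebra.topologicalClosure_minimal le_rfl closed
  exact top_le (StarSubalgebra.mem_top (x := g))

theorem mem_closure_range_mul {𝕜 : Type*} [RCLike 𝕜] [T2Space X] {a b : C(X, 𝕜)}
    (h : ∀ x, a x = 0 → b x = 0) : b ∈ closure (Set.range (a * ·)) := by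
  have range_eq : Set.range (a * ·) = (Ideal.span {a} : Set C(X, 𝕜)) := by
    ext f
    simp only [Set.mem_range, SetLike.mem_coe, Ideal.mem_span_singleton', mul_comm a]
  rw [range_eq, ← Ideal.coe_closure, ← ContinuousMap.idealOfSet_ofIdeal_eq_closure,
    SetLike.mem_coe, ContinuousMap.mem_idealOfSet]
  exact fun x hx ↦ h x (ContinuousMap.notMem_setOfIdeal.1 hx (Ideal.mem_span_singleton_self a))

variable [T2Space X]

theorem gramAlgebra_le_of_zeros_subset (φ : C(X, ℂ) →⋆ₐ[ℂ] A) {v : ι → A}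
    (hv : ∀ i, star (v i) * v i = 1) {a b : ι → C(X, ℂ)}
    (hsep : ∀ ⦃x y⦄, x ≠ y → ∃ i, ‖a i x‖ ≠ ‖a i y‖) (hzero : ∀ i x, a i x = 0 → b i x = 0) :
    gramAlgebra (fun i ↦ v i * φ (b i)) ≤ gramAlgebra (fun i ↦ v i * φ (a i)) := by
  set B := gramAlgebra (fun i ↦ v i * φ (a i))
  have hB : IsClosed (B : Set A) := isClosed_gramAlgebra _
  have map_mem : ∀ g, φ g ∈ B := by
    refine map_mem_of_separatesPoints φ hB (s := Set.range fun i ↦ star (a i) * a i) ?_ ?_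
    · rintro _ ⟨i, rfl⟩
      have h := star_mul_mem_gramAlgebra (fun i ↦ v i * φ (a i)) i i
      rwa [star_mul, mul_assoc, ← mul_assoc (star (v i)), hv, one_mul, ← map_star, ← map_mul] at h
    · intro x y hxy
      obtain ⟨i, hi⟩ := hsep hxy
      refine ⟨_, ⟨i, rfl⟩, fun h ↦ hi ?_⟩
      simpa [RCLike.star_def, RCLike.conj_mul, ← Complex.ofReal_pow] using h
  have mem_closure (i : ι) : v i * φ (b i) ∈ closure ((v i * φ (a i) * ·) '' (B : Set A)) := by
    have hcont : Continuous fun g ↦ v i * φ g := continuous_const.mul (map_continuous φ)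
    refine map_mem_closure (f := fun g ↦ v i * φ g) hcont (mem_closure_range_mul (hzero i)) ?_
    rintro _ ⟨g, rfl⟩
    exact ⟨φ g, map_mem g, by simp only [map_mul, mul_assoc]⟩
  exact gramAlgebra_le hB fun i j ↦ star_mul_mem_of_mem_closure hB
    (star_mul_mem_gramAlgebra _ i j) (mem_closure i) (mem_closure j)

theorem gramAlgebra_eq_of_zeros_eq (φ : C(X, ℂ) →⋆ₐ[ℂ] A) {v : ι → A}
    (hv : ∀ i, star (v i) * v i = 1) {a b : ι → C(X, ℂ)}
    (ha : ∀ ⦃x y⦄, x ≠ y → ∃ i, ‖a i x‖ ≠ ‖a i y‖) (hb : ∀ ⦃x y⦄, x ≠ y → ∃ i, ‖b i x‖ ≠ ‖b i y‖)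
    (hzero : ∀ i x, a i x = 0 ↔ b i x = 0) :
    gramAlgebra (fun i ↦ v i * φ (a i)) = gramAlgebra (fun i ↦ v i * φ (b i)) :=
  le_antisymm (gramAlgebra_le_of_zeros_subset φ hv hb fun i x ↦ (hzero i x).2)
    (gramAlgebra_le_of_zeros_subset φ hv ha fun i x ↦ (hzero i x).1)

end GramAlgebra

section SequenceSpace

variable {𝕜 ι κ X : Type*} [RCLike 𝕜] [TopologicalSpace X] [CompactSpace X]

theorem diagonal_entry_norm_le (p : ι → X) (g : C(X, 𝕜)) (k : ι) :
    ‖g (p k) • ContinuousLinearMap.id 𝕜 𝕜‖ ≤ ‖g‖ := by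
  simpa [norm_smul] using g.norm_coe_le_norm (p k)

/-- The representation of `C(X)` on `ℓ²(ι)` by diagonal operators, `g ↦ diag (g (p k))ₖ`, attached
to a family of points `p` of `X`. -/
def diagonalRep (p : ι → X) : C(X, 𝕜) →⋆ₐ[𝕜] (ℓ²(ι, 𝕜) →L[𝕜] ℓ²(ι, 𝕜)) where
  toFun g := lp.mapCLM 2 (fun k ↦ g (p k) • ContinuousLinearMap.id 𝕜 𝕜) (norm_nonneg g)
    (diagonal_entry_norm_le p g)
  map_one' := by ext; simp
  map_mul' g h := by ext; simp [mul_assoc]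
  map_zero' := by ext; simp
  map_add' g h := by ext; simp [add_mul]
  commutes' c := by ext; simp [Algebra.algebraMap_eq_smul_one]
  map_star' g := by
    rw [ContinuousLinearMap.star_eq_adjoint, ContinuousLinearMap.eq_adjoint_iff]
    intro x y
    simp only [lp.inner_eq_tsum]
    congr! 2
    simp [mul_assoc, mul_left_comm]

theorem diagonalRep_apply (p : ι → X) (g : C(X, 𝕜)) (x : ℓ²(ι, 𝕜)) (k : ι) :
    diagonalRep p g x k = g (p k) * x k := rfl

variable [DecidableEq κ]

theorem orthonormal_single_comp {σ : ι → κ} (hσ : σ.Injective) :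
    Orthonormal 𝕜 fun k ↦ (lp.single 2 (σ k) 1 : ℓ²(κ, 𝕜)) := by
  classical
  rw [orthonormal_iff_ite]
  intro k l
  simp [lp.inner_single_left, Pi.single_apply, hσ.eq_iff]

/-- The isometry `ℓ²(ι) → ℓ²(κ)` that moves the standard basis along an injection `σ`,
`e k ↦ e (σ k)`. -/
def basisShift {σ : ι → κ} (hσ : σ.Injective) : ℓ²(ι, 𝕜) →ₗᵢ[𝕜] ℓ²(κ, 𝕜) :=
  (orthonormal_single_comp hσ).orthogonalFamily.linearIsometry

variable [DecidableEq ι]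

theorem diagonalRep_single (p : ι → X) (g : C(X, 𝕜)) (k : ι) :
    diagonalRep p g (lp.single 2 k 1) = g (p k) • lp.single 2 k 1 := by
  ext l
  rw [diagonalRep_apply, lp.coeFn_smul, Pi.smul_apply, smul_eq_mul]
  obtain rfl | hl := eq_or_ne l k
  · rfl
  · simp [hl]

theorem basisShift_single {σ : ι → κ} (hσ : σ.Injective) (k : ι) :
    basisShift (𝕜 := 𝕜) hσ (lp.single 2 k 1) = lp.single 2 (σ k) 1 := by
  rw [basisShift, OrthogonalFamily.linearIsometry_apply_single]
  simp

theorem ext_single {E : Type*} [NormedAddCommGroup E] [NormedSpace 𝕜 E]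
    {S T : ℓ²(ι, 𝕜) →L[𝕜] E} (h : ∀ k, S (lp.single 2 k 1) = T (lp.single 2 k 1)) : S = T := by
  refine lp.ext_continuousLinearMap (by simp) fun k ↦ ?_
  ext
  exact h k

end SequenceSpace

section ENatPow

/-- The power `r ^ s` with exponent `s : ℕ∞`, where `r ^ ∞ = 0`. -/
def enatPow (r : ℝ) : ℕ∞ → ℝ :=
  ENat.recTopCoe 0 (r ^ ·)

@[simp]
theorem enatPow_coe (r : ℝ) (m : ℕ) : enatPow r m = r ^ m := rfl

@[simp]
theorem enatPow_top (r : ℝ) : enatPow r ⊤ = 0 := rfl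

variable {r : ℝ}

theorem enatPow_strictAnti (hr : r ∈ Set.Ioo (0 : ℝ) 1) : StrictAnti (enatPow r) := by
  intro s t hst
  lift s to ℕ using hst.ne_top
  cases t with
  | top => exact pow_pos hr.1 s
  | coe t => exact pow_lt_pow_right_of_lt_one₀ hr.1 hr.2 (Nat.cast_lt.1 hst)

theorem enatPow_nonneg (hr : r ∈ Set.Ioo (0 : ℝ) 1) (s : ℕ∞) : 0 ≤ enatPow r s :=
  (enatPow_strictAnti hr).antitone le_top

theorem enatPow_eq_zero_iff (hr : r ∈ Set.Ioo (0 : ℝ) 1) {s : ℕ∞} : enatPow r s = 0 ↔ s = ⊤ :=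
  (enatPow_strictAnti hr).injective.eq_iff' (enatPow_top r)

theorem continuous_enatPow (hr : r ∈ Set.Ioo (0 : ℝ) 1) : Continuous (enatPow r) := by
  refine continuous_iff_continuousAt.2 fun s ↦ ?_
  cases s with
  | coe m => rw [ContinuousAt, ENat.nhds_natCast]; exact tendsto_pure_nhds _ _
  | top =>
    refine tendsto_order.2 ⟨fun a ha ↦ .of_forall fun s ↦ ha.trans_le (enatPow_nonneg hr s),
      fun ε hε ↦ ?_⟩
    obtain ⟨N, hN⟩ := exists_pow_lt_of_lt_one hε hr.2
    filter_upwards [Ioi_mem_nhds (ENat.natCast_lt_top N)] with s hs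
    exact (enatPow_strictAnti hr hs).trans hN

end ENatPow

section AntitoneTuples

/-- The compact space of tuples `∞ ≥ x 0 ≥ x 1 ≥ ⋯ ≥ x n` of extended natural numbers. It is the
joint spectrum of the operators `(w i)* (w i)`, whatever the value of `q`. -/
abbrev AntitoneTuple (n : ℕ) : Type := {x : Fin (n + 1) → ℕ∞ // Antitone x}

variable {n : ℕ}

instance : CompactSpace (AntitoneTuple n) :=
  isCompact_iff_compactSpace.1 isClosed_antitone.isCompact

/-- The tuple of partial sums `i ↦ k 0 + ⋯ + k (n - i - 1)` of a multi-index. -/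
def headSums (k : Fin n → ℕ) : AntitoneTuple n where
  val i := ((∑ m with m.val < n - i.val, k m : ℕ) : ℕ∞)
  property i j hij := by
    have : i.val ≤ j.val := hij
    refine Nat.cast_le.2 (Finset.sum_le_sum_of_subset fun m ↦ ?_)
    simp only [Finset.mem_filter_univ]
    omega

theorem headSums_apply (k : Fin n → ℕ) (i : Fin (n + 1)) :
    (headSums k).1 i = (∑ m with m.val < n - i.val, k m : ℕ) := rfl

theorem headSums_zero (k : Fin n → ℕ) : (headSums k).1 0 = (∑ m, k m : ℕ) := by
  simp [headSums]

theorem headSums_succ (k : Fin n → ℕ) (j : Fin n) :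
    (headSums k).1 j.succ = (∑ m with m.val < n - 1 - j.val, k m : ℕ) := by
  simp only [headSums, Fin.val_succ, Nat.sub_sub, Nat.add_comm]

theorem headSums_castSucc (k : Fin n → ℕ) (j : Fin n) :
    (headSums k).1 j.castSucc =
      ((∑ m with m.val < n - 1 - j.val, k m) + k (shiftIdx j) : ℕ) := by
  have filter_eq : Finset.univ.filter (fun m : Fin n ↦ m.val < n - j.val) =
      insert (shiftIdx j) (Finset.univ.filter fun m ↦ m.val < n - 1 - j.val) := by
    ext m
    simp only [shiftIdx, Finset.mem_insert, Finset.mem_filter_univ, Fin.ext_iff]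
    omega
  rw [headSums_apply, Fin.val_castSucc, filter_eq, Finset.sum_insert (by simp [shiftIdx]), add_comm]

end AntitoneTuples

section Amplitude

variable {n : ℕ} {r : ℝ}

/-- The function on `AntitoneTuple n` whose value at `headSums k` is `‖w i e_k‖²`, for
`r = q⁻²`. -/
def ampSq (r : ℝ) (i : Fin (n + 1)) (x : AntitoneTuple n) : ℝ :=
  Fin.cases (enatPow r (x.1 0))
    (fun j ↦ enatPow r (x.1 j.succ) - r * enatPow r (x.1 j.castSucc)) i

theorem ampSq_zero (r : ℝ) (x : AntitoneTuple n) : ampSq r 0 x = enatPow r (x.1 0) := rfl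

theorem ampSq_succ (r : ℝ) (j : Fin n) (x : AntitoneTuple n) :
    ampSq r j.succ x = enatPow r (x.1 j.succ) - r * enatPow r (x.1 j.castSucc) := rfl

theorem continuous_ampSq (hr : r ∈ Set.Ioo (0 : ℝ) 1) (i : Fin (n + 1)) :
    Continuous (ampSq r i) := by
  have hcoord (l : Fin (n + 1)) : Continuous fun x : AntitoneTuple n ↦ enatPow r (x.1 l) :=
    (continuous_enatPow hr).comp ((continuous_apply l).comp continuous_subtype_val)
  cases i using Fin.cases with
  | zero => exact hcoord 0
  | succ j => exact (hcoord j.succ).sub ((hcoord j.castSucc).const_mul r)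

theorem ampSq_le_enatPow (hr : r ∈ Set.Ioo (0 : ℝ) 1) (i : Fin (n + 1)) (x : AntitoneTuple n) :
    ampSq r i x ≤ enatPow r (x.1 i) := by
  cases i using Fin.cases with
  | zero => exact le_rfl
  | succ j => exact sub_le_self _ (mul_nonneg hr.1.le (enatPow_nonneg hr _))

theorem one_sub_mul_enatPow_le_ampSq (hr : r ∈ Set.Ioo (0 : ℝ) 1) (i : Fin (n + 1))
    (x : AntitoneTuple n) : (1 - r) * enatPow r (x.1 i) ≤ ampSq r i x := by
  cases i using Fin.cases with
  | zero => exact mul_le_of_le_one_left (enatPow_nonneg hr _) (sub_le_self 1 hr.1.le)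
  | succ j =>
    have hle : enatPow r (x.1 j.castSucc) ≤ enatPow r (x.1 j.succ) :=
      (enatPow_strictAnti hr).antitone (x.2 j.castSucc_le_succ)
    rw [ampSq_succ, sub_mul, one_mul]
    gcongr
    exact hr.1.le

theorem ampSq_nonneg (hr : r ∈ Set.Ioo (0 : ℝ) 1) (i : Fin (n + 1)) (x : AntitoneTuple n) :
    0 ≤ ampSq r i x :=
  (mul_nonneg (sub_nonneg.2 hr.2.le) (enatPow_nonneg hr _)).trans
    (one_sub_mul_enatPow_le_ampSq hr i x)

theorem ampSq_eq_zero_iff (hr : r ∈ Set.Ioo (0 : ℝ) 1) (i : Fin (n + 1)) (x : AntitoneTuple n) :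
    ampSq r i x = 0 ↔ x.1 i = ⊤ := by
  rw [← enatPow_eq_zero_iff hr]
  refine ⟨fun h ↦ ?_, fun h ↦ ?_⟩
  · have hle := h ▸ one_sub_mul_enatPow_le_ampSq hr i x
    exact (nonpos_of_mul_nonpos_right hle (sub_pos.2 hr.2)).antisymm (enatPow_nonneg hr _)
  · exact (h ▸ ampSq_le_enatPow hr i x).antisymm (ampSq_nonneg hr i x)

theorem eq_of_forall_ampSq_eq (hr : r ∈ Set.Ioo (0 : ℝ) 1) {x y : AntitoneTuple n}
    (h : ∀ i, ampSq r i x = ampSq r i y) : x = y := by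
  ext i
  refine (enatPow_strictAnti hr).injective ?_
  induction i using Fin.induction with
  | zero => exact h 0
  | succ j ih => simpa only [ampSq_succ, ih, sub_left_inj] using h j.succ

/-- The modulus of the weighted shift `w i`, as a function on `AntitoneTuple n`, for `r = q⁻²`. -/
def amplitude (hr : r ∈ Set.Ioo (0 : ℝ) 1) (i : Fin (n + 1)) : C(AntitoneTuple n, ℂ) where
  toFun x := (√(ampSq r i x) : ℝ)
  continuous_toFun := Complex.continuous_ofReal.comp (continuous_ampSq hr i).sqrt

theorem amplitude_apply (hr : r ∈ Set.Ioo (0 : ℝ) 1) (i : Fin (n + 1)) (x : AntitoneTuple n) :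
    amplitude hr i x = (√(ampSq r i x) : ℝ) := rfl

theorem norm_amplitude_sq (hr : r ∈ Set.Ioo (0 : ℝ) 1) (i : Fin (n + 1)) (x : AntitoneTuple n) :
    ‖amplitude hr i x‖ ^ 2 = ampSq r i x := by
  rw [amplitude_apply, Complex.norm_real, Real.norm_eq_abs, sq_abs,
    Real.sq_sqrt (ampSq_nonneg hr i x)]

theorem amplitude_eq_zero_iff (hr : r ∈ Set.Ioo (0 : ℝ) 1) (i : Fin (n + 1))
    (x : AntitoneTuple n) : amplitude hr i x = 0 ↔ x.1 i = ⊤ := by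
  rw [← ampSq_eq_zero_iff hr, ← norm_amplitude_sq hr, sq_eq_zero_iff, norm_eq_zero]

theorem exists_norm_amplitude_ne (hr : r ∈ Set.Ioo (0 : ℝ) 1) ⦃x y : AntitoneTuple n⦄
    (hxy : x ≠ y) : ∃ i, ‖amplitude hr i x‖ ≠ ‖amplitude hr i y‖ := by
  contrapose! hxy
  exact eq_of_forall_ampSq_eq hr fun i ↦ by simp only [← norm_amplitude_sq hr, hxy]

end Amplitude

section WeightedShifts

variable {n : ℕ}

/-- The injection of multi-indices along which `w i` moves the standard basis: the identity for
`i = 0`, and `k ↦ k + δ` at the coordinate `shiftIdx j` for `i = j + 1`. -/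
def indexShift (i : Fin (n + 1)) : (Fin n → ℕ) → Fin n → ℕ :=
  Fin.cases id (fun j k ↦ Function.update k (shiftIdx j) (k (shiftIdx j) + 1)) i

theorem indexShift_injective (i : Fin (n + 1)) : (indexShift i).Injective := by
  cases i using Fin.cases with
  | zero => exact Function.injective_id
  | succ j =>
    have indexShift_eq (k : Fin n → ℕ) : indexShift j.succ k = k + Pi.single (shiftIdx j) 1 := by
      ext m
      obtain rfl | hm := eq_or_ne m (shiftIdx j) <;> simp_all [indexShift]
    intro k l h
    rwa [indexShift_eq, indexShift_eq, add_left_inj] at h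

theorem zpow_neg_two_mem_Ioo {q : ℝ} (hq : 1 < q) : q ^ (-2 : ℤ) ∈ Set.Ioo (0 : ℝ) 1 :=
  ⟨by positivity, zpow_lt_one_of_neg₀ hq (by norm_num)⟩

theorem sqrt_zpow_neg_two_pow {q : ℝ} (hq : 0 < q) (s : ℕ) :
    √((q ^ (-2 : ℤ)) ^ s) = q ^ (-s : ℤ) := by
  rw [Real.sqrt_eq_iff_mul_self_eq (by positivity) (by positivity), ← zpow_natCast, ← zpow_mul,
    ← zpow_add₀ hq.ne']
  congr 1
  ring

theorem sqrt_ampSq_headSums_zero {q : ℝ} (hq : 1 < q) (k : Fin n → ℕ) :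
    √(ampSq (q ^ (-2 : ℤ)) 0 (headSums k)) = q ^ (-∑ m, (k m : ℤ)) := by
  rw [ampSq_zero, headSums_zero, enatPow_coe, sqrt_zpow_neg_two_pow (by positivity), Nat.cast_sum]

theorem sqrt_ampSq_headSums_succ {q : ℝ} (hq : 1 < q) (j : Fin n) (k : Fin n → ℕ) :
    √(ampSq (q ^ (-2 : ℤ)) j.succ (headSums k)) =
      q ^ (-∑ m with m.val < n - 1 - j.val, (k m : ℤ)) *
        √(1 - q ^ (-2 * ((k (shiftIdx j) : ℤ) + 1))) := by
  rw [ampSq_succ, headSums_succ, headSums_castSucc, enatPow_coe, enatPow_coe, zpow_mul,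
    ← Nat.cast_sum, ← sqrt_zpow_neg_two_pow (by positivity), ← Real.sqrt_mul (by positivity)]
  congr 1
  norm_cast
  ring

theorem projAlg_eq_gramAlgebra (w : Fin (n + 1) → Hn n →L[ℂ] Hn n) :
    projAlg w = gramAlgebra w := rfl

end WeightedShifts

end QuantumProjectiveSpace

namespace IsWFamily

open QuantumProjectiveSpace

variable {n : ℕ} {q : ℝ} {w : Fin (n + 1) → Hn n →L[ℂ] Hn n}

theorem apply_en (hq : 1 < q) (hw : IsWFamily q w) (i : Fin (n + 1)) (k : Fin n → ℕ) :
    w i (en k) = amplitude (zpow_neg_two_mem_Ioo hq) i (headSums k) • en (indexShift i k) := by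
  rw [amplitude_apply, Complex.coe_smul]
  cases i using Fin.cases with
  | zero => rw [sqrt_ampSq_headSums_zero hq]; exact hw.1 k
  | succ j => rw [sqrt_ampSq_headSums_succ hq]; exact hw.2 j k

theorem eq_basisShift_mul (hq : 1 < q) (hw : IsWFamily q w) :
    w = fun i ↦ (basisShift (indexShift_injective i)).toContinuousLinearMap *
      diagonalRep headSums (amplitude (zpow_neg_two_mem_Ioo hq) i) := by
  funext i
  refine ext_single fun k ↦ ?_
  rw [mul_apply_eq_comp, diagonalRep_single, map_smul,
    LinearIsometry.coe_toContinuousLinearMap, basisShift_single]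
  exact hw.apply_en hq i k

theorem projAlg_eq {q' : ℝ} (hq : 1 < q) (hq' : 1 < q')
    {w' : Fin (n + 1) → Hn n →L[ℂ] Hn n} (hw : IsWFamily q w) (hw' : IsWFamily q' w') :
    projAlg w = projAlg w' := by
  rw [projAlg_eq_gramAlgebra, projAlg_eq_gramAlgebra, hw.eq_basisShift_mul hq,
    hw'.eq_basisShift_mul hq']
  refine gramAlgebra_eq_of_zeros_eq _ (fun i ↦ LinearIsometry.adjoint_comp_self _)
    (exists_norm_amplitude_ne _) (exists_norm_amplitude_ne _) fun i x ↦ ?_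
  rw [amplitude_eq_zero_iff, amplitude_eq_zero_iff]

end IsWFamily

/-- For every integer `n ≥ 1` and all reals `q, q' > 1`, the concrete quantum projective
space C*-algebras `B_n(q)` and `B_n(q')` are isomorphic as unital C*-algebras: there is a
unital star-algebra isomorphism `B_n(q) ≅ B_n(q')`.  In particular `C(ℂP_q^n)` is
independent of `q`. -/
theorem stmt_0 (n : ℕ) (hn : 1 ≤ n) (q q' : ℝ) (hq : 1 < q) (hq' : 1 < q')
    (w : Fin (n + 1) → (Hn n →L[ℂ] Hn n)) (w' : Fin (n + 1) → (Hn n →L[ℂ] Hn n))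
    (hw : IsWFamily q w) (hw' : IsWFamily q' w') :
    Nonempty ((projAlg w) ≃⋆ₐ[ℂ] (projAlg w')) := by
  rw [hw.projAlg_eq hq hq' hw']
  exact ⟨StarAlgEquiv.refl _ _⟩
end
end

section
/- For every integer k ≥ 1 and every real q > 1: (a) every compact operator on H_k belongs to B_k(q); and (b) there exists a surjective unital *-homomorphism φ : B_k(q) → B_{k−1}(q) whose kernel is exactly the set K(H_k) of compact operators on H_k. Equivalently, there is a short exact sequence of C*-algebras 0 → K → C(ℂP_q^k) → C(ℂP_q^{k−1}) → 0, where C(ℂP_q^0) ≅ ℂ. -/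
noncomputable section

/-! Cut `H_{n+1}` into the finite-dimensional spaces spanned by the `e_m` with `|m| = d`. Forgetting
the last entry of `m` embeds the `d`-th of them into the `d`-th summand of `ℓ²(ℤ; H_n)`; let `W` be
the resulting isometry, `S` the bilateral shift of `ℓ²(ℤ; H_n)` and `ρ` the diagonal representation
of the bounded operators on `H_n` on it. The weights of `w_{j+1}` at `m` and of `w'_j` at the
truncation of `m` agree up to an error at most `q^{-|m|}`, so modulo compact operators `W`
intertwines `w_{j+1}` with `S ρ(w'_j)` and their adjoints likewise, while `w_0` is compact. As
`S* S = 1`, it intertwines `w_{i+1}* w_{j+1}` with `ρ(w'_i* w'_j)`. The matrix coefficients of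
`ρ(z)` do not decay as `d → ∞`, so `W* ρ(z) W` is compact only for `z = 0`: the pairs `(x, z)` such
that `W` intertwines `x` and `ρ(z)` modulo compacts form the graph of the required homomorphism. -/

open Filter Topology InnerProductSpace ContinuousLinearMap
open scoped InnerProduct CStarAlgebra

section CompactOperators

variable {α 𝕜 E F G : Type*} [RCLike 𝕜] [NormedAddCommGroup E] [NormedSpace 𝕜 E]
  [NormedAddCommGroup F] [NormedSpace 𝕜 F] [NormedAddCommGroup G] [NormedSpace 𝕜 G]

theorem tendsto_comp_zero_of_isCompactOperator {l : Filter α} {A : α → F →L[𝕜] G} {C : ℝ}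
    (hC : ∀ a, ‖A a‖ ≤ C) (hA : ∀ v, Tendsto (fun a => A a v) l (𝓝 0))
    {T : E →L[𝕜] F} (hT : IsCompactOperator T) :
    Tendsto (fun a => A a ∘L T) l (𝓝 0) := by
  refine Metric.tendsto_nhds.2 fun ε hε => ?_
  have hC0 : 0 < |C| + 1 := by positivity
  obtain ⟨K, hK, hTK⟩ := hT.image_closedBall_subset_compact (f := (T : E →ₗ[𝕜] F)) 1
  obtain ⟨t, ht, hKt⟩ := Metric.totallyBounded_iff.1 hK.totallyBounded (ε / 4 / (|C| + 1))
    (by positivity)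
  have hsmall : ∀ᶠ a in l, ∀ y ∈ t, ‖A a y‖ < ε / 4 :=
    (eventually_all_finite ht).2 fun y _ =>
      (tendsto_zero_iff_norm_tendsto_zero.1 (hA y)).eventually_lt_const (by positivity)
  filter_upwards [hsmall] with a ha
  have hunit : ∀ v : E, ‖v‖ = 1 → ‖(A a ∘L T) v‖ ≤ ε / 2 := by
    intro v hv
    obtain ⟨y, hy, hvy⟩ : ∃ y ∈ t, T v ∈ Metric.ball y (ε / 4 / (|C| + 1)) := by
      simpa using hKt (hTK ⟨v, by simp [hv], rfl⟩)
    calc ‖A a (T v)‖ = ‖A a y + A a (T v - y)‖ := by rw [← map_add, add_sub_cancel]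
      _ ≤ ‖A a y‖ + ‖A a‖ * ‖T v - y‖ :=
          (norm_add_le _ _).trans (add_le_add_right (le_opNorm _ _) _)
      _ ≤ ε / 4 + (|C| + 1) * (ε / 4 / (|C| + 1)) := by
          gcongr
          · exact (ha y hy).le
          · exact (hC a).trans (by linarith [le_abs_self C])
          · exact (mem_ball_iff_norm.1 hvy).le
      _ = ε / 2 := by rw [mul_div_cancel₀ _ hC0.ne']; ring
  rw [dist_zero_right]
  exact (opNorm_le_of_unit_norm (by positivity) hunit).trans_lt (half_lt_self hε)

end CompactOperators

section OrthonormalBases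

variable {ι 𝕜 E F : Type*} [RCLike 𝕜]
  [NormedAddCommGroup E] [InnerProductSpace 𝕜 E] [NormedAddCommGroup F] [InnerProductSpace 𝕜 F]

theorem isCompactOperator_rankOne (u : E) (v : F) :
    IsCompactOperator (rankOne 𝕜 u v) := by
  rw [rankOne_def']
  exact (isCompactOperator_of_locallyCompactSpace_rng (toSpanSingleton 𝕜 u)).comp_clm _

theorem clm_ext_hilbertBasis (b : HilbertBasis ι 𝕜 E) {A B : E →L[𝕜] F}
    (h : ∀ i, A (b i) = B (b i)) : A = B :=
  ContinuousLinearMap.ext_on (Submodule.dense_iff_topologicalClosure_eq_top.2 b.dense_span)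
    (by rintro _ ⟨i, rfl⟩; exact h i)

theorem norm_sum_smul_sq {f : ι → E} (hf : Pairwise fun i j => ⟪f i, f j⟫_𝕜 = 0)
    (s : Finset ι) (c : ι → 𝕜) : ‖∑ i ∈ s, c i • f i‖ ^ 2 = ∑ i ∈ s, ‖c i‖ ^ 2 * ‖f i‖ ^ 2 := by
  classical
  induction s using Finset.induction_on with
  | empty => simp
  | insert i s hi ih =>
    have horth : ⟪c i • f i, ∑ j ∈ s, c j • f j⟫_𝕜 = 0 := by
      rw [inner_sum]
      refine Finset.sum_eq_zero fun j hj => ?_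
      rw [inner_smul_left, inner_smul_right, hf (by rintro rfl; exact hi hj), mul_zero, mul_zero]
    rw [Finset.sum_insert hi, Finset.sum_insert hi, ← ih, sq,
      norm_add_sq_eq_norm_sq_add_norm_sq_of_inner_eq_zero _ _ horth, norm_smul]
    ring

theorem opNorm_le_of_pairwise_orthogonal (b : HilbertBasis ι 𝕜 E) {A : E →L[𝕜] F}
    (hA : Pairwise fun i j => ⟪A (b i), A (b j)⟫_𝕜 = 0) {C : ℝ} (hC : 0 ≤ C)
    (h : ∀ i, ‖A (b i)‖ ≤ C) : ‖A‖ ≤ C := by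
  refine opNorm_le_bound _ hC fun v => ?_
  have hlim : Tendsto (fun s => ‖∑ i ∈ s, b.repr v i • A (b i)‖) atTop (𝓝 ‖A v‖) := by
    simpa using ((b.hasSum_repr v).mapL A).norm
  refine le_of_tendsto' hlim fun s => abs_le_of_sq_le_sq' ?_ (by positivity) |>.2
  calc ‖∑ i ∈ s, b.repr v i • A (b i)‖ ^ 2
      = ∑ i ∈ s, ‖b.repr v i‖ ^ 2 * ‖A (b i)‖ ^ 2 := norm_sum_smul_sq hA s _
    _ ≤ ∑ i ∈ s, ‖⟪b i, v⟫_𝕜‖ ^ 2 * C ^ 2 := by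
        simp only [b.repr_apply_apply]
        gcongr with i
        exact h i
    _ = C ^ 2 * ∑ i ∈ s, ‖⟪b i, v⟫_𝕜‖ ^ 2 := by rw [← Finset.sum_mul, mul_comm]
    _ ≤ C ^ 2 * ‖v‖ ^ 2 := by gcongr; exact b.orthonormal.sum_inner_products_le v
    _ = (C * ‖v‖) ^ 2 := (mul_pow _ _ _).symm

/-- The orthogonal projection onto the span of the basis vectors `b i`, `i ∈ s`. -/
def coordProj (b : HilbertBasis ι 𝕜 E) (s : Finset ι) : E →L[𝕜] E :=
  ∑ i ∈ s, rankOne 𝕜 (b i) (b i)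

theorem coordProj_apply (b : HilbertBasis ι 𝕜 E) (s : Finset ι) (v : E) :
    coordProj b s v = ∑ i ∈ s, b.repr v i • b i := by
  simp [coordProj, b.repr_apply_apply]

theorem coordProj_basis [DecidableEq ι] (b : HilbertBasis ι 𝕜 E) (s : Finset ι) (i : ι) :
    coordProj b s (b i) = if i ∈ s then b i else 0 := by
  simp [coordProj, orthonormal_iff_ite.1 b.orthonormal]

theorem isCompactOperator_coordProj (b : HilbertBasis ι 𝕜 E) (s : Finset ι) :
    IsCompactOperator (coordProj b s) :=
  Submodule.sum_mem (compactOperator (RingHom.id 𝕜) E E) fun i _ =>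
    isCompactOperator_rankOne (b i) (b i)

theorem norm_one_sub_coordProj_le (b : HilbertBasis ι 𝕜 E) (s : Finset ι) :
    ‖1 - coordProj b s‖ ≤ 1 := by
  classical
  have hb : ∀ i, (1 - coordProj b s) (b i) = if i ∈ s then 0 else b i := by
    intro i
    rw [sub_apply, one_apply_eq_self, coordProj_basis]
    split_ifs <;> simp
  refine opNorm_le_of_pairwise_orthogonal b (fun i j hij => ?_) zero_le_one fun i => ?_
  · simp only [hb]
    split_ifs <;> simp [b.orthonormal.2 hij]
  · rw [hb]
    split_ifs <;> simp [b.orthonormal.1 i]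

theorem tendsto_coordProj_comp (b : HilbertBasis ι 𝕜 E) {T : F →L[𝕜] E}
    (hT : IsCompactOperator T) : Tendsto (fun s => coordProj b s ∘L T) atTop (𝓝 T) := by
  have hstrong : ∀ v, Tendsto (fun s => (1 - coordProj b s) v) atTop (𝓝 0) := by
    intro v
    simpa [coordProj_apply] using (b.hasSum_repr v).const_sub v
  simpa [sub_comp, one_def] using
    (tendsto_comp_zero_of_isCompactOperator (norm_one_sub_coordProj_le b) hstrong hT).const_sub T

theorem isCompactOperator_of_pairwise_orthogonal [CompleteSpace F] (b : HilbertBasis ι 𝕜 E)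
    {A : E →L[𝕜] F} (hA : Pairwise fun i j => ⟪A (b i), A (b j)⟫_𝕜 = 0)
    (h : Tendsto (fun i => ‖A (b i)‖) cofinite (𝓝 0)) : IsCompactOperator A := by
  classical
  suffices Tendsto (fun s => A ∘L coordProj b s) atTop (𝓝 A) from
    isCompactOperator_of_tendsto this
      (Eventually.of_forall fun s => (isCompactOperator_coordProj b s).clm_comp A)
  refine Metric.tendsto_nhds.2 fun ε hε => ?_
  have hlarge : {i | ¬ ‖A (b i)‖ < ε / 2}.Finite := h.eventually_lt_const (half_pos hε)
  filter_upwards [eventually_ge_atTop hlarge.toFinset] with s hs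
  have hb : ∀ i, (A - A ∘L coordProj b s) (b i) = if i ∈ s then 0 else A (b i) := by
    intro i
    rw [sub_apply, comp_apply, coordProj_basis]
    split_ifs <;> simp
  rw [dist_comm, dist_eq_norm]
  refine (opNorm_le_of_pairwise_orthogonal b (fun i j hij => ?_) (half_pos hε).le
    fun i => ?_).trans_lt (half_lt_self hε)
  · simp only [hb]
    split_ifs <;> simp [hA hij]
  · rw [hb]
    split_ifs with his
    · simpa using (half_pos hε).le
    · exact (not_not.1 fun hi => his (hs (hlarge.mem_toFinset.2 hi))).le

variable [CompleteSpace E] [CompleteSpace F]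

theorem isCompactOperator_adjoint {T : E →L[𝕜] F} (hT : IsCompactOperator T) :
    IsCompactOperator (T†) := by
  obtain ⟨_, b, -⟩ := exists_hilbertBasis 𝕜 F
  have hlim := (adjoint.continuous.tendsto T).comp (tendsto_coordProj_comp b hT)
  refine isCompactOperator_of_tendsto hlim (Eventually.of_forall fun s => ?_)
  have hfinite : (coordProj b s ∘L T)† = ∑ i ∈ s, rankOne 𝕜 ((T†) (b i)) (b i) := by
    simp [coordProj, comp_finsetSum, adjoint_comp, map_sum, comp_rankOne]
  rw [Function.comp_apply, hfinite]
  exact Submodule.sum_mem (compactOperator (RingHom.id 𝕜) F E) fun i _ =>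
    isCompactOperator_rankOne _ _

theorem tendsto_comp_coordProj (b : HilbertBasis ι 𝕜 E) {T : E →L[𝕜] F}
    (hT : IsCompactOperator T) : Tendsto (fun s => T ∘L coordProj b s) atTop (𝓝 T) := by
  simpa [Function.comp_def, adjoint_comp, coordProj, map_sum] using
    (adjoint.continuous.tendsto (T†)).comp
      (tendsto_coordProj_comp b (isCompactOperator_adjoint hT))

theorem tendsto_norm_apply_cofinite_of_isCompactOperator (b : HilbertBasis ι 𝕜 E) {T : E →L[𝕜] F}
    (hT : IsCompactOperator T) : Tendsto (fun i => ‖T (b i)‖) cofinite (𝓝 0) := by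
  classical
  refine Metric.tendsto_nhds.2 fun ε hε => ?_
  obtain ⟨s, hs⟩ := ((Metric.tendsto_nhds.1 (tendsto_comp_coordProj b hT)) ε hε).exists
  refine (s.finite_toSet.subset fun i hi => ?_ : {i | ¬ dist ‖T (b i)‖ 0 < ε}.Finite)
  by_contra his
  refine hi ?_
  calc dist ‖T (b i)‖ 0 = ‖(T - T ∘L coordProj b s) (b i)‖ := by
        simp [coordProj_basis, show i ∉ s from his]
    _ ≤ ‖T - T ∘L coordProj b s‖ * ‖b i‖ := le_opNorm _ _
    _ < ε := by rwa [b.orthonormal.1 i, mul_one, ← dist_eq_norm, dist_comm]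

theorem mem_of_isCompactOperator {K : Submodule 𝕜 (E →L[𝕜] F)}
    (hK : IsClosed (K : Set (E →L[𝕜] F))) (h : ∀ u v, rankOne 𝕜 u v ∈ K) {T : E →L[𝕜] F}
    (hT : IsCompactOperator T) : T ∈ K := by
  obtain ⟨_, b, -⟩ := exists_hilbertBasis 𝕜 E
  refine hK.mem_of_tendsto (tendsto_comp_coordProj b hT) (Eventually.of_forall fun s => ?_)
  simpa only [coordProj, comp_finsetSum, comp_rankOne, SetLike.mem_coe] using
    K.sum_mem fun i _ => h (T (b i)) (b i)

end OrthonormalBases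

section WeightedShifts

variable {𝕜 E F ι κ : Type*} [RCLike 𝕜] [NormedAddCommGroup E] [InnerProductSpace 𝕜 E]
  [NormedAddCommGroup F] [InnerProductSpace 𝕜 F]
  {b : HilbertBasis ι 𝕜 E} {c : HilbertBasis κ 𝕜 F} {f : ι → κ} {a : ι → 𝕜} {A : E →L[𝕜] F}

theorem norm_apply_of_weightedShift (hA : ∀ i, A (b i) = a i • c (f i)) (i : ι) :
    ‖A (b i)‖ = ‖a i‖ := by
  rw [hA, norm_smul, c.orthonormal.norm_eq_one, mul_one]

theorem pairwise_orthogonal_of_weightedShift (hf : Function.Injective f)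
    (hA : ∀ i, A (b i) = a i • c (f i)) : Pairwise fun i j => ⟪A (b i), A (b j)⟫_𝕜 = 0 := by
  intro i j hij
  simp only [hA, inner_smul_left, inner_smul_right, c.orthonormal.2 (hf.ne hij), mul_zero]

theorem opNorm_le_of_weightedShift (hf : Function.Injective f)
    (hA : ∀ i, A (b i) = a i • c (f i)) {C : ℝ} (hC : 0 ≤ C) (ha : ∀ i, ‖a i‖ ≤ C) : ‖A‖ ≤ C :=
  opNorm_le_of_pairwise_orthogonal b (pairwise_orthogonal_of_weightedShift hf hA) hC fun i =>
    (norm_apply_of_weightedShift hA i).trans_le (ha i)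

theorem tendsto_pow_of_diagonal {T : E →L[𝕜] E} (hT : ∀ i, T (b i) = a i • b i) {i₀ : ι}
    (h₀ : a i₀ = 1) {r : ℝ} (hr₀ : 0 ≤ r) (hr₁ : r < 1) (ha : ∀ i ≠ i₀, ‖a i‖ ≤ r) :
    Tendsto (fun N => T ^ N) atTop (𝓝 (rankOne 𝕜 (b i₀) (b i₀))) := by
  classical
  have hpow : ∀ (N : ℕ) i, (T ^ N) (b i) = a i ^ N • b i := by
    intro N i
    induction N with
    | zero => simp
    | succ N ih => rw [pow_succ', mul_apply_eq_comp, ih, map_smul, hT, smul_smul, pow_succ]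
  have hdiff : ∀ (N : ℕ) i, (T ^ N - rankOne 𝕜 (b i₀) (b i₀)) (b i) =
      (if i = i₀ then 0 else a i ^ N) • b (id i) := by
    intro N i
    by_cases hi : i = i₀
    · simp [hi, hpow, h₀, b.orthonormal.norm_eq_one]
    · simp [hi, hpow, orthonormal_iff_ite.1 b.orthonormal, Ne.symm hi]
  refine tendsto_iff_norm_sub_tendsto_zero.2 <| squeeze_zero (fun _ => norm_nonneg _)
    (fun N => opNorm_le_of_weightedShift Function.injective_id (hdiff N) (pow_nonneg hr₀ N)
      fun i => ?_) (tendsto_pow_atTop_nhds_zero_of_lt_one hr₀ hr₁)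
  split_ifs with hi
  · simpa using pow_nonneg hr₀ N
  · simpa using pow_le_pow_left₀ (norm_nonneg _) (ha i hi) N

variable [CompleteSpace F]

theorem isCompactOperator_of_weightedShift (hf : Function.Injective f)
    (hA : ∀ i, A (b i) = a i • c (f i)) (ha : Tendsto a cofinite (𝓝 0)) :
    IsCompactOperator A := by
  refine isCompactOperator_of_pairwise_orthogonal b (pairwise_orthogonal_of_weightedShift hf hA) ?_
  simpa only [norm_apply_of_weightedShift hA, norm_zero] using ha.norm

variable [CompleteSpace E]

theorem inner_adjoint_of_weightedShift [DecidableEq κ] (hA : ∀ i, A (b i) = a i • c (f i))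
    (i : ι) (k : κ) : ⟪b i, (A†) (c k)⟫_𝕜 = if f i = k then star (a i) else 0 := by
  rw [adjoint_inner_right, hA, inner_smul_left, orthonormal_iff_ite.1 c.orthonormal, mul_ite,
    mul_one, mul_zero, starRingEnd_apply]

theorem adjoint_weightedShift_apply (hf : Function.Injective f)
    (hA : ∀ i, A (b i) = a i • c (f i)) (i : ι) : (A†) (c (f i)) = star (a i) • b i := by
  classical
  refine b.repr.injective (lp.ext (funext fun j => ?_))
  rw [b.repr_apply_apply, b.repr_apply_apply, inner_adjoint_of_weightedShift hA, inner_smul_right,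
    orthonormal_iff_ite.1 b.orthonormal, mul_ite, mul_one, mul_zero]
  by_cases hji : j = i
  · rw [hji, if_pos rfl, if_pos rfl]
  · rw [if_neg (hf.ne hji), if_neg hji]

theorem adjoint_weightedShift_apply_of_notMem_range (hA : ∀ i, A (b i) = a i • c (f i)) {k : κ}
    (hk : k ∉ Set.range f) : (A†) (c k) = 0 := by
  classical
  refine b.repr.map_eq_zero_iff.1 (lp.ext (funext fun j => ?_))
  rw [b.repr_apply_apply, inner_adjoint_of_weightedShift hA, if_neg fun h => hk ⟨j, h⟩]
  rfl

end WeightedShifts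

section BasisIsometries

variable {𝕜 E F ι κ : Type*} [RCLike 𝕜] [NormedAddCommGroup E] [InnerProductSpace 𝕜 E]
  [NormedAddCommGroup F] [InnerProductSpace 𝕜 F] [CompleteSpace F]

theorem exists_linearIsometry_hilbertBasis (b : HilbertBasis ι 𝕜 E) {v : ι → F}
    (hv : Orthonormal 𝕜 v) : ∃ f : E →ₗᵢ[𝕜] F, ∀ i, f (b i) = v i := by
  classical
  refine ⟨hv.orthogonalFamily.linearIsometry.comp b.repr.toLinearIsometry, fun i => ?_⟩
  simp [b.repr_self]

/-- The isometry `b i ↦ c (f i)` along an injective map `f` of the index sets. -/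
def basisIsometry (b : HilbertBasis ι 𝕜 E) (c : HilbertBasis κ 𝕜 F) (f : ι ↪ κ) : E →L[𝕜] F :=
  (exists_linearIsometry_hilbertBasis b
    (c.orthonormal.comp f f.injective)).choose.toContinuousLinearMap

variable (b : HilbertBasis ι 𝕜 E) (c : HilbertBasis κ 𝕜 F) (f : ι ↪ κ)

theorem basisIsometry_basis (i : ι) : basisIsometry b c f (b i) = c (f i) :=
  (exists_linearIsometry_hilbertBasis b (c.orthonormal.comp f f.injective)).choose_spec i

variable [CompleteSpace E]

theorem adjoint_comp_basisIsometry : (basisIsometry b c f)† ∘L basisIsometry b c f = 1 :=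
  LinearIsometry.adjoint_comp_self _

theorem adjoint_basisIsometry_basis (i : ι) : ((basisIsometry b c f)†) (c (f i)) = b i := by
  rw [← basisIsometry_basis b c f i]
  exact DFunLike.congr_fun (adjoint_comp_basisIsometry b c f) (b i)

end BasisIsometries

section CompactOperatorsInStarSubalgebras

variable {E ι : Type*} [NormedAddCommGroup E] [InnerProductSpace ℂ E] [CompleteSpace E]
  (b : HilbertBasis ι ℂ E)

theorem mem_of_isCompactOperator_of_rankOne_basis_mem {S : StarSubalgebra ℂ (E →L[ℂ] E)}
    (hS : IsClosed (S : Set (E →L[ℂ] E))) {e : E} (he : ‖e‖ = 1)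
    (h : ∀ i, rankOne ℂ (b i) e ∈ S) {T : E →L[ℂ] E} (hT : IsCompactOperator T) : T ∈ S := by
  have hrank : ∀ u, rankOne ℂ u e ∈ S := by
    let R : E →L[ℂ] E →L[ℂ] E := (rankOne ℂ).flip e
    let V : Submodule ℂ E := (Subalgebra.toSubmodule S.toSubalgebra).comap R.toLinearMap
    have hV : (Submodule.span ℂ (Set.range b)).topologicalClosure ≤ V :=
      Submodule.topologicalClosure_minimal _ (Submodule.span_le.2 (Set.range_subset_iff.2 h))
        (hS.preimage R.continuous)
    exact fun u => hV (b.dense_span ▸ Submodule.mem_top)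
  refine mem_of_isCompactOperator (K := Subalgebra.toSubmodule S.toSubalgebra) hS (fun u v => ?_) hT
  have hprod : rankOne ℂ u v = rankOne ℂ u e * star (rankOne ℂ v e) := by
    rw [star_eq_adjoint, adjoint_rankOne, mul_def, rankOne_comp_rankOne]
    simp [he]
  rw [hprod]
  exact (mul_mem (hrank u) (star_mem (hrank v)) : _ ∈ S)

end CompactOperatorsInStarSubalgebras

section HilbertSums

variable {𝕜 E ι κ : Type*} [RCLike 𝕜] [NormedAddCommGroup E] [InnerProductSpace 𝕜 E]

/-- The standard orthonormal basis of `ℓ²(ι)`. -/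
def stdHilbertBasis (𝕜 ι : Type*) [RCLike 𝕜] : HilbertBasis ι 𝕜 (lp (fun _ : ι => 𝕜) 2) :=
  HilbertBasis.ofRepr (LinearIsometryEquiv.refl 𝕜 _)

theorem stdHilbertBasis_apply [DecidableEq ι] (i : ι) :
    stdHilbertBasis 𝕜 ι i = lp.single 2 i 1 := by
  rw [← HilbertBasis.repr_symm_single]
  rfl

theorem orthonormal_lpSingle_hilbertBasis [DecidableEq ι] (b : HilbertBasis κ 𝕜 E) :
    Orthonormal 𝕜 fun p : ι × κ => lp.single (E := fun _ : ι => E) 2 p.1 (b p.2) := by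
  classical
  refine orthonormal_iff_ite.2 fun ⟨i, k⟩ ⟨j, l⟩ => ?_
  rw [lp.inner_single_left, lp.single_apply]
  by_cases hij : i = j
  · subst hij
    simpa using orthonormal_iff_ite.1 b.orthonormal k l
  · simp [hij]

/-- The orthonormal basis of the Hilbert sum `ℓ²(ι; E)` made of copies of a basis of `E`. -/
def hilbertSumBasis (ι : Type*) [DecidableEq ι] [CompleteSpace E] (b : HilbertBasis κ 𝕜 E) :
    HilbertBasis (ι × κ) 𝕜 (lp (fun _ : ι => E) 2) :=
  HilbertBasis.mkOfOrthogonalEqBot (orthonormal_lpSingle_hilbertBasis (ι := ι) b) <| by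
    refine (Submodule.eq_bot_iff _).2 fun x hx => lp.ext (funext fun i => ?_)
    refine b.repr.map_eq_zero_iff.1 (lp.ext (funext fun k => ?_))
    have hxk := hx _ (Submodule.subset_span ⟨(i, k), rfl⟩)
    rwa [lp.inner_single_left, ← b.repr_apply_apply] at hxk

theorem hilbertSumBasis_apply [DecidableEq ι] [CompleteSpace E] (b : HilbertBasis κ 𝕜 E)
    (i : ι) (k : κ) : hilbertSumBasis ι b (i, k) = lp.single 2 i (b k) := by
  rw [hilbertSumBasis, HilbertBasis.coe_mkOfOrthogonalEqBot]

variable [CompleteSpace E]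

/-- The diagonal representation `T ↦ ⨁ T` of the bounded operators on `E` on `ℓ²(ι; E)`. -/
def ampliation (𝕜 E ι : Type*) [RCLike 𝕜] [NormedAddCommGroup E] [InnerProductSpace 𝕜 E]
    [CompleteSpace E] :
    (E →L[𝕜] E) →⋆ₐ[𝕜] (lp (fun _ : ι => E) 2 →L[𝕜] lp (fun _ : ι => E) 2) where
  toFun T := lp.mapCLM 2 (fun _ => T) (norm_nonneg T) fun _ => le_rfl
  map_one' := rfl
  map_mul' _ _ := rfl
  map_zero' := rfl
  map_add' _ _ := rfl
  commutes' _ := rfl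
  map_star' T := by
    refine (eq_adjoint_iff _ _).2 fun x y => ?_
    simp only [lp.inner_eq_tsum]
    exact tsum_congr fun i => adjoint_inner_left T _ _

theorem ampliation_single [DecidableEq ι] (T : E →L[𝕜] E) (i : ι) (v : E) :
    ampliation 𝕜 E ι T (lp.single 2 i v) = lp.single 2 i (T v) := by
  ext j
  change T (lp.single (E := fun _ : ι => E) 2 i v j) = lp.single (E := fun _ : ι => E) 2 i (T v) j
  by_cases hj : j = i
  · subst hj
    simp
  · simp [hj]

theorem ampliation_hilbertSumBasis [DecidableEq ι] {b : HilbertBasis κ 𝕜 E} {T : E →L[𝕜] E}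
    {k l : κ} {a : 𝕜} (hT : T (b k) = a • b l) (i : ι) :
    ampliation 𝕜 E ι T (hilbertSumBasis ι b (i, k)) = a • hilbertSumBasis ι b (i, l) := by
  rw [hilbertSumBasis_apply, hilbertSumBasis_apply, ampliation_single, hT, lp.single_smul]

end HilbertSums

section StarAlgHomsFromGraphs

variable {A B : Type*} [CStarAlgebra A] [CStarAlgebra B]

-- The first projection of the graph is an injective *-homomorphism of C*-algebras, hence isometric,
-- so its range is closed.
theorem exists_starAlgHom_of_closed_graph (Γ : StarSubalgebra ℂ (A × B))
    (hΓ : IsClosed (Γ : Set (A × B))) (hzero : ∀ b, ((0, b) : A × B) ∈ Γ → b = 0)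
    {S : StarSubalgebra ℂ B} (hS : IsClosed (S : Set B)) {G : Set A}
    (hG : ∀ g ∈ G, ∃ b ∈ S, (g, b) ∈ Γ) :
    ∃ φ : (StarAlgebra.adjoin ℂ G).topologicalClosure →⋆ₐ[ℂ] S,
      ∀ x : (StarAlgebra.adjoin ℂ G).topologicalClosure, ((x : A), (φ x : B)) ∈ Γ := by
  let Δ : StarSubalgebra ℂ (A × B) := Γ ⊓ S.comap (StarAlgHom.snd ℂ A B)
  have hΔ : IsClosed (Δ : Set (A × B)) := hΓ.inter (hS.preimage continuous_snd)
  let π : Δ →⋆ₐ[ℂ] A := (StarAlgHom.fst ℂ A B).comp Δ.subtype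
  have hπ : Function.Injective π := by
    refine (injective_iff_map_eq_zero π).2 fun ⟨⟨a, b⟩, hab⟩ ha => ?_
    obtain rfl : a = 0 := ha
    exact Subtype.ext (Prod.ext rfl (hzero b hab.1))
  have hrange : (StarAlgebra.adjoin ℂ G).topologicalClosure ≤ π.range := by
    refine StarSubalgebra.topologicalClosure_minimal (StarAlgebra.adjoin_le fun g hg => ?_) ?_
    · obtain ⟨b, hb, hgb⟩ := hG g hg
      exact ⟨⟨(g, b), hgb, hb⟩, rfl⟩
    · exact (NonUnitalStarAlgHom.isometry π hπ).isClosedEmbedding.isClosed_range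
  let lift : (StarAlgebra.adjoin ℂ G).topologicalClosure →⋆ₐ[ℂ] Δ :=
    ((StarAlgEquiv.ofInjective π hπ).symm : π.range →⋆ₐ[ℂ] Δ).comp
      (StarSubalgebra.inclusion hrange)
  have hlift : ∀ x, (lift x : A × B).1 = x := fun x =>
    congrArg Subtype.val ((StarAlgEquiv.ofInjective π hπ).apply_symm_apply
      (StarSubalgebra.inclusion hrange x))
  refine ⟨StarAlgHom.codRestrict (((StarAlgHom.snd ℂ A B).comp Δ.subtype).comp lift) S
    fun x => (lift x).2.2, fun x => ?_⟩
  rw [← hlift x]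
  exact (lift x).2.1

end StarAlgHomsFromGraphs

section EssentialIntertwining

variable {H L : Type*} [NormedAddCommGroup H] [InnerProductSpace ℂ H]
  [NormedAddCommGroup L] [InnerProductSpace ℂ L]

theorem isCompactOperator_comp_mul_sub_mul_comp {V : H →L[ℂ] L} {x₁ x₂ : H →L[ℂ] H}
    {c₁ c₂ : L →L[ℂ] L} (h₁ : IsCompactOperator (V ∘L x₁ - c₁ ∘L V))
    (h₂ : IsCompactOperator (V ∘L x₂ - c₂ ∘L V)) :
    IsCompactOperator (V ∘L (x₁ * x₂) - (c₁ * c₂) ∘L V) := by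
  have hsplit : V ∘L (x₁ * x₂) - (c₁ * c₂) ∘L V =
      (V ∘L x₁ - c₁ ∘L V) ∘L x₂ + c₁ ∘L (V ∘L x₂ - c₂ ∘L V) := by
    simp only [mul_def, sub_comp, comp_sub, comp_assoc, sub_add_sub_cancel]
  rw [hsplit]
  exact (h₁.comp_clm x₂).add (h₂.clm_comp c₁)

theorem isCompactOperator_comp_add_sub_add_comp {V : H →L[ℂ] L} {x₁ x₂ : H →L[ℂ] H}
    {c₁ c₂ : L →L[ℂ] L} (h₁ : IsCompactOperator (V ∘L x₁ - c₁ ∘L V))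
    (h₂ : IsCompactOperator (V ∘L x₂ - c₂ ∘L V)) :
    IsCompactOperator (V ∘L (x₁ + x₂) - (c₁ + c₂) ∘L V) := by
  rw [comp_add, add_comp, add_sub_add_comm]
  exact h₁.add h₂

variable [CompleteSpace H] [CompleteSpace L]

/-- The C⋆-algebra of pairs of operators intertwined by `V` modulo the compact operators:
`V x - c V` and `V x* - c* V` are compact. -/
def essIntertwined (V : H →L[ℂ] L) : StarSubalgebra ℂ ((H →L[ℂ] H) × (L →L[ℂ] L)) where
  carrier := {p | IsCompactOperator (V ∘L p.1 - p.2 ∘L V) ∧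
    IsCompactOperator (V ∘L star p.1 - star p.2 ∘L V)}
  mul_mem' {p r} hp hr := ⟨isCompactOperator_comp_mul_sub_mul_comp hp.1 hr.1, by
    simpa only [Prod.fst_mul, Prod.snd_mul, star_mul] using
      isCompactOperator_comp_mul_sub_mul_comp hr.2 hp.2⟩
  add_mem' {p r} hp hr := ⟨isCompactOperator_comp_add_sub_add_comp hp.1 hr.1, by
    simpa only [Prod.fst_add, Prod.snd_add, star_add] using
      isCompactOperator_comp_add_sub_add_comp hp.2 hr.2⟩
  algebraMap_mem' r := by
    have hcomm : ∀ r : ℂ, V ∘L algebraMap ℂ (H →L[ℂ] H) r - algebraMap ℂ (L →L[ℂ] L) r ∘L V = 0 :=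
      fun r => by simp [Algebra.algebraMap_eq_smul_one, one_def]
    simp only [Set.mem_ofPred_eq, Prod.algebraMap_apply, ← algebraMap_star_comm, hcomm]
    exact ⟨isCompactOperator_zero, isCompactOperator_zero⟩
  star_mem' {p} hp := ⟨hp.2, by simpa only [Prod.fst_star, Prod.snd_star, star_star] using hp.1⟩

theorem mem_essIntertwined {V : H →L[ℂ] L} {x : H →L[ℂ] H} {c : L →L[ℂ] L} :
    (x, c) ∈ essIntertwined V ↔ IsCompactOperator (V ∘L x - c ∘L V) ∧
      IsCompactOperator (V ∘L x† - c† ∘L V) :=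
  Iff.rfl

theorem isClosed_essIntertwined (V : H →L[ℂ] L) :
    IsClosed (essIntertwined V : Set ((H →L[ℂ] H) × (L →L[ℂ] L))) := by
  have hcont : Continuous fun p : (H →L[ℂ] H) × (L →L[ℂ] L) => V ∘L p.1 - p.2 ∘L V := by fun_prop
  have hclosed := isClosed_setOfPred_isCompactOperator.preimage hcont
  exact hclosed.inter (hclosed.preimage continuous_star)

theorem mk_zero_mem_essIntertwined (V : H →L[ℂ] L) {x : H →L[ℂ] H} (hx : IsCompactOperator x) :
    (x, (0 : L →L[ℂ] L)) ∈ essIntertwined V := by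
  simp only [mem_essIntertwined, map_zero, zero_comp, sub_zero]
  exact ⟨hx.clm_comp V, (isCompactOperator_adjoint hx).clm_comp V⟩

/-- The compression `V* c V` of an operator `c` along `V`. -/
def compression (V : H →L[ℂ] L) : (L →L[ℂ] L) →ₗ[ℂ] (H →L[ℂ] H) where
  toFun c := V† ∘L c ∘L V
  map_add' c d := by simp only [add_comp, comp_add]
  map_smul' r c := by simp only [smul_comp, comp_smul, RingHom.id_apply]

theorem continuous_compression (V : H →L[ℂ] L) : Continuous (compression V) :=
  continuous_const.clm_comp (continuous_id.clm_comp continuous_const)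

theorem isCompactOperator_sub_compression {V : H →L[ℂ] L} (hV : V† ∘L V = 1) {x : H →L[ℂ] H}
    {c : L →L[ℂ] L} (h : (x, c) ∈ essIntertwined V) : IsCompactOperator (x - compression V c) := by
  have hsplit : x - compression V c = V† ∘L (V ∘L x - c ∘L V) := by
    rw [comp_sub, ← comp_assoc, hV, one_def, id_comp]
    rfl
  rw [hsplit]
  exact (mem_essIntertwined.1 h).1.clm_comp (V†)

variable {B : Type*} [CStarAlgebra B] {V : H →L[ℂ] L} {ρ : B →⋆ₐ[ℂ] (L →L[ℂ] L)}

theorem eq_zero_of_mk_zero_mem_essIntertwined (hV : V† ∘L V = 1)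
    (hρ : ∀ b, IsCompactOperator (compression V (ρ b)) → b = 0) {b : B}
    (h : ((0 : H →L[ℂ] H), ρ b) ∈ essIntertwined V) : b = 0 := by
  refine hρ b ?_
  have h0 := (isCompactOperator_sub_compression hV h).neg
  rwa [zero_sub, ← FunLike.coe_neg, neg_neg] at h0

variable {G : Set (H →L[ℂ] H)} {G' : Set B}

theorem compression_mem_of_mem_topologicalClosure (hV : V† ∘L V = 1)
    {S : StarSubalgebra ℂ (H →L[ℂ] H)} (hS : IsClosed (S : Set (H →L[ℂ] H)))
    (hcompact : ∀ T : H →L[ℂ] H, IsCompactOperator T → T ∈ S)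
    (hG' : ∀ b ∈ G', ∃ x ∈ S, (x, ρ b) ∈ essIntertwined V)
    {b : B} (hb : b ∈ (StarAlgebra.adjoin ℂ G').topologicalClosure) :
    compression V (ρ b) ∈ S := by
  have hclosed : IsClosed {b | compression V (ρ b) ∈ S} :=
    hS.preimage ((continuous_compression V).comp (map_continuous ρ))
  let Δ := essIntertwined V ⊓ S.comap (StarAlgHom.fst ℂ _ _)
  have hadjoin : StarAlgebra.adjoin ℂ G' ≤ (Δ.map (StarAlgHom.snd ℂ _ _)).comap ρ := by
    refine StarAlgebra.adjoin_le fun b hb => ?_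
    obtain ⟨x, hx, hxb⟩ := hG' b hb
    exact ⟨(x, ρ b), ⟨hxb, hx⟩, rfl⟩
  refine closure_minimal (fun b hb => ?_) hclosed hb
  obtain ⟨⟨x, c⟩, ⟨hxc, hx⟩, rfl : c = ρ b⟩ := hadjoin hb
  rw [Set.mem_ofPred_eq, ← sub_sub_cancel x (compression V (ρ b))]
  exact sub_mem hx (hcompact _ (isCompactOperator_sub_compression hV hxc))

theorem exists_surjective_starAlgHom_ker_compact (hV : V† ∘L V = 1)
    (hρ : ∀ b, IsCompactOperator (compression V (ρ b)) → b = 0)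
    (hcompact : ∀ T : H →L[ℂ] H, IsCompactOperator T →
      T ∈ (StarAlgebra.adjoin ℂ G).topologicalClosure)
    (hG : ∀ x ∈ G, ∃ b ∈ (StarAlgebra.adjoin ℂ G').topologicalClosure,
      (x, ρ b) ∈ essIntertwined V)
    (hG' : ∀ b ∈ G', ∃ x ∈ (StarAlgebra.adjoin ℂ G).topologicalClosure,
      (x, ρ b) ∈ essIntertwined V) :
    ∃ φ : (StarAlgebra.adjoin ℂ G).topologicalClosure →⋆ₐ[ℂ]
        (StarAlgebra.adjoin ℂ G').topologicalClosure,
      Function.Surjective φ ∧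
        ∀ x, φ x = 0 ↔ IsCompactOperator (x : H →L[ℂ] H) := by
  let Γ : StarSubalgebra ℂ ((H →L[ℂ] H) × B) := (essIntertwined V).comap
    ((StarAlgHom.fst ℂ _ _).prod (ρ.comp (StarAlgHom.snd ℂ _ _)))
  have hΓ : IsClosed (Γ : Set ((H →L[ℂ] H) × B)) :=
    (isClosed_essIntertwined _).preimage
      (continuous_fst.prodMk ((map_continuous ρ).comp continuous_snd))
  obtain ⟨φ, hφ⟩ := exists_starAlgHom_of_closed_graph Γ hΓ
    (fun b hb => eq_zero_of_mk_zero_mem_essIntertwined hV hρ hb)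
    (StarSubalgebra.isClosed_topologicalClosure _) hG
  replace hφ : ∀ x : (StarAlgebra.adjoin ℂ G).topologicalClosure,
      ((x : H →L[ℂ] H), ρ (φ x : B)) ∈ essIntertwined V := hφ
  have hsub : ∀ x : (StarAlgebra.adjoin ℂ G).topologicalClosure,
      IsCompactOperator ((x : H →L[ℂ] H) - compression V (ρ (φ x : B))) :=
    fun x => isCompactOperator_sub_compression hV (hφ x)
  refine ⟨φ, fun ⟨b, hb⟩ => ?_, fun x => ⟨fun hx => ?_, fun hx => ?_⟩⟩
  · have hmem := compression_mem_of_mem_topologicalClosure hV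
      (StarSubalgebra.isClosed_topologicalClosure _) hcompact hG' hb
    have hb' := hsub ⟨_, hmem⟩
    rw [← map_sub, ← map_sub] at hb'
    exact ⟨⟨_, hmem⟩, Subtype.ext (sub_eq_zero.1 (hρ _ hb')).symm⟩
  · have hx' := hsub x
    rwa [hx, ZeroMemClass.coe_zero, map_zero, map_zero, sub_zero] at hx'
  · have hx0 : ((0 : H →L[ℂ] H), ρ (φ x : B)) ∈ essIntertwined V := by
      have hdiff := (essIntertwined V).sub_mem (hφ x) (mk_zero_mem_essIntertwined V hx)
      rwa [Prod.mk_sub_mk, sub_self, sub_zero] at hdiff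
    exact Subtype.ext (eq_zero_of_mk_zero_mem_essIntertwined hV hρ hx0)

end EssentialIntertwining

section MultiIndices

variable {ι : Type*}

section IncrDecr

variable [DecidableEq ι]

/-- The multi-index `k + δ_i`. -/
def incr (k : ι → ℕ) (i : ι) : ι → ℕ := Function.update k i (k i + 1)

/-- The multi-index `k - δ_i`, with the junk value `k` when `k i = 0`. -/
def decr (k : ι → ℕ) (i : ι) : ι → ℕ := Function.update k i (k i - 1)

theorem incr_decr {k : ι → ℕ} {i : ι} (h : k i ≠ 0) : incr (decr k i) i = k := by
  simp [incr, decr, Nat.sub_add_cancel (Nat.pos_of_ne_zero h)]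

theorem decr_incr (k : ι → ℕ) (i : ι) : decr (incr k i) i = k := by
  simp [incr, decr]

theorem incr_injective (i : ι) : Function.Injective fun k : ι → ℕ => incr k i :=
  Function.LeftInverse.injective (g := fun k => decr k i) fun k => decr_incr k i

end IncrDecr

variable [Fintype ι]

theorem tendsto_sum_cofinite_atTop : Tendsto (fun k : ι → ℕ => ∑ i, k i) cofinite atTop := by
  refine tendsto_atTop.2 fun N => eventually_cofinite.2 ?_
  refine (Set.Finite.pi fun _ : ι => Set.finite_Iic N).subset fun k hk i _ => ?_
  exact (Finset.single_le_sum (fun _ _ => zero_le) (Finset.mem_univ i)).trans (not_le.1 hk).le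

theorem tendsto_pow_sum_cofinite {r : ℝ} (h₀ : 0 ≤ r) (h₁ : r < 1) :
    Tendsto (fun k : ι → ℕ => r ^ ∑ i, k i) cofinite (𝓝 0) :=
  (tendsto_pow_atTop_nhds_zero_of_lt_one h₀ h₁).comp tendsto_sum_cofinite_atTop

theorem sum_incr [DecidableEq ι] (k : ι → ℕ) (i : ι) : ∑ m, incr k i m = ∑ m, k m + 1 := by
  rw [incr, Finset.sum_update_of_mem (Finset.mem_univ i),
    ← Finset.add_sum_erase _ _ (Finset.mem_univ i), Finset.sdiff_singleton_eq_erase]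
  omega

theorem multiIndex_induction {κ : Type*} [Finite κ] [DecidableEq κ] {P : (κ → ℕ) → Prop}
    (zero : P 0) (incr : ∀ k i, P k → P (incr k i)) (k : κ → ℕ) : P k := by
  cases nonempty_fintype κ
  induction hd : ∑ i, k i generalizing k with
  | zero =>
    obtain rfl : k = 0 := funext fun i => Finset.sum_eq_zero_iff.1 hd i (Finset.mem_univ i)
    exact zero
  | succ d ih =>
    obtain ⟨i, -, hi⟩ : ∃ i ∈ Finset.univ, k i ≠ 0 :=
      Finset.exists_ne_zero_of_sum_ne_zero (by omega)
    have hsum := sum_incr (decr k i) i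
    rw [incr_decr hi] at hsum
    exact incr_decr hi ▸ incr _ i (ih _ (by omega))

variable {n : ℕ}

theorem init_incr_castSucc (k : Fin (n + 1) → ℕ) (i : Fin n) :
    Fin.init (incr k i.castSucc) = incr (Fin.init k) i := by
  simp [incr, Fin.init]

theorem init_incr_last (k : Fin (n + 1) → ℕ) : Fin.init (incr k (Fin.last n)) = Fin.init k := by
  simp [incr]

theorem init_decr_castSucc (k : Fin (n + 1) → ℕ) (i : Fin n) :
    Fin.init (decr k i.castSucc) = decr (Fin.init k) i := by
  simp [decr, Fin.init]

theorem init_decr_last (k : Fin (n + 1) → ℕ) : Fin.init (decr k (Fin.last n)) = Fin.init k := by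
  simp [decr]

theorem shiftIdx_zero : shiftIdx (0 : Fin (n + 1)) = Fin.last n := by
  ext
  simp [shiftIdx]

theorem shiftIdx_succ (i : Fin n) : shiftIdx i.succ = (shiftIdx i).castSucc := by
  ext
  simp only [shiftIdx, Fin.val_succ, Fin.val_castSucc]
  omega

theorem shiftIdx_shiftIdx (j : Fin n) : shiftIdx (shiftIdx j) = j := by
  ext
  simp only [shiftIdx]
  omega

/-- The exponent `k_1 + ⋯ + k_{n-1-j}` of `q⁻¹` in the weight of `w j.succ`. -/
def headDegree (j : Fin n) (k : Fin n → ℕ) : ℕ :=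
  ∑ m ∈ Finset.univ.filter fun m : Fin n => (m : ℕ) < n - 1 - j, k m

theorem headDegree_incr_shiftIdx (j : Fin n) (k : Fin n → ℕ) :
    headDegree j (incr k (shiftIdx j)) = headDegree j k := by
  refine Finset.sum_congr rfl fun m hm => Function.update_of_ne ?_ _ _
  rintro rfl
  exact (Finset.mem_filter.1 hm).2.ne rfl

theorem headDegree_succ (i : Fin n) (k : Fin (n + 1) → ℕ) :
    headDegree i.succ k = headDegree i (Fin.init k) := by
  simp only [headDegree, Finset.sum_filter, Fin.sum_univ_castSucc, Fin.val_succ, Fin.val_castSucc,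
    Fin.val_last, Fin.init]
  rw [if_neg (by omega), add_zero]
  exact Finset.sum_congr rfl fun m _ => if_congr (by omega) rfl rfl

theorem headDegree_zero (k : Fin (n + 1) → ℕ) : headDegree 0 k = ∑ m, Fin.init k m := by
  simp [headDegree, Finset.sum_filter, Fin.sum_univ_castSucc, Fin.init]

end MultiIndices

section Generators

theorem sqrt_one_sub_sq_pos {t : ℝ} (h₀ : 0 ≤ t) (h₁ : t < 1) : 0 < √(1 - t ^ 2) :=
  Real.sqrt_pos.2 (by nlinarith)

theorem abs_sqrt_one_sub_sq_sub_one_le {t : ℝ} (h₀ : 0 ≤ t) (h₁ : t ≤ 1) :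
    |√(1 - t ^ 2) - 1| ≤ t := by
  have hle : √(1 - t ^ 2) ≤ 1 := Real.sqrt_le_one.2 (by nlinarith)
  have hge : 1 - t ≤ √(1 - t ^ 2) := Real.le_sqrt_of_sq_le (by nlinarith)
  rw [abs_sub_comm, abs_of_nonneg (by linarith)]
  linarith

/-- The standard basis `(e_k)` of `H_n`. -/
abbrev enBasis (n : ℕ) : HilbertBasis (Fin n → ℕ) ℂ (Hn n) := stdHilbertBasis ℂ (Fin n → ℕ)

theorem enBasis_apply {n : ℕ} (k : Fin n → ℕ) : enBasis n k = en k := stdHilbertBasis_apply k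

/-- The weight `q^{-(k_1+⋯+k_{n-1-j})} (1 - q^{-2a})^{1/2}` of `w j.succ`, which maps `e_k` to
`e_{k+δ}` for `a = k (shiftIdx j) + 1`. -/
def shiftWeight (q : ℝ) {n : ℕ} (j : Fin n) (k : Fin n → ℕ) (a : ℕ) : ℝ :=
  q⁻¹ ^ headDegree j k * √(1 - (q⁻¹ ^ a) ^ 2)

theorem shiftWeight_ne_zero {q : ℝ} (hq : 1 < q) {n : ℕ} (j : Fin n) (k : Fin n → ℕ) (a : ℕ) :
    shiftWeight q j k (a + 1) ≠ 0 := by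
  have hq0 : 0 < q⁻¹ := inv_pos.2 (zero_lt_one.trans hq)
  exact (mul_pos (pow_pos hq0 _) (sqrt_one_sub_sq_pos (pow_pos hq0 _).le
    (pow_lt_one₀ hq0.le (inv_lt_one_of_one_lt₀ hq) a.succ_ne_zero))).ne'

theorem shiftWeight_exponent_zero (q : ℝ) {n : ℕ} (j : Fin n) (k : Fin n → ℕ) :
    shiftWeight q j k 0 = 0 := by
  simp [shiftWeight]

theorem shiftWeight_succ (q : ℝ) {n : ℕ} (i : Fin n) (k : Fin (n + 1) → ℕ) (a : ℕ) :
    shiftWeight q i.succ k a = shiftWeight q i (Fin.init k) a := by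
  rw [shiftWeight, shiftWeight, headDegree_succ]

theorem abs_shiftWeight_zero_sub_le {q : ℝ} (hq : 1 < q) {n : ℕ} {k : Fin (n + 1) → ℕ} {a : ℕ}
    (ha : k (Fin.last n) ≤ a) :
    |shiftWeight q 0 k a - q⁻¹ ^ ∑ m, Fin.init k m| ≤ q⁻¹ ^ ∑ m, k m := by
  have hq0 : 0 ≤ q⁻¹ := inv_nonneg.2 (zero_le_one.trans hq.le)
  have hq1 : q⁻¹ ≤ 1 := inv_le_one_of_one_le₀ hq.le
  have hsqrt : |√(1 - (q⁻¹ ^ a) ^ 2) - 1| ≤ q⁻¹ ^ k (Fin.last n) :=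
    (abs_sqrt_one_sub_sq_sub_one_le (pow_nonneg hq0 a) (pow_le_one₀ hq0 hq1)).trans
      (pow_le_pow_of_le_one hq0 hq1 ha)
  rw [shiftWeight, headDegree_zero, ← mul_sub_one, abs_mul, abs_of_nonneg (pow_nonneg hq0 _),
    Fin.sum_univ_castSucc k, pow_add]
  exact mul_le_mul_of_nonneg_left hsqrt (pow_nonneg hq0 _)

namespace IsWFamily

variable {q : ℝ} {n : ℕ} {w : Fin (n + 1) → (Hn n →L[ℂ] Hn n)} (hw : IsWFamily q w)
include hw

theorem zero_apply (k : Fin n → ℕ) :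
    w 0 (enBasis n k) = ((q⁻¹ ^ ∑ m, k m : ℝ) : ℂ) • enBasis n k := by
  rw [enBasis_apply, hw.1, Complex.coe_smul, ← Nat.cast_sum, ← inv_zpow', zpow_natCast]
  rfl

theorem succ_apply (j : Fin n) (k : Fin n → ℕ) :
    w j.succ (enBasis n k) =
      (shiftWeight q j k (k (shiftIdx j) + 1) : ℂ) • enBasis n (incr k (shiftIdx j)) := by
  have hexp : q ^ (-2 * ((k (shiftIdx j) : ℤ) + 1)) = (q⁻¹ ^ (k (shiftIdx j) + 1)) ^ 2 := by
    rw [← pow_mul, inv_pow, ← zpow_natCast, ← zpow_neg]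
    push_cast
    ring_nf
  rw [enBasis_apply, enBasis_apply, hw.2, Complex.coe_smul, shiftWeight, hexp, headDegree, incr,
    ← Nat.cast_sum, ← inv_zpow', zpow_natCast]
  rfl

theorem star_zero_apply (k : Fin n → ℕ) :
    star (w 0) (enBasis n k) = ((q⁻¹ ^ ∑ m, k m : ℝ) : ℂ) • enBasis n k := by
  rw [star_eq_adjoint]
  simpa using adjoint_weightedShift_apply Function.injective_id hw.zero_apply k

theorem star_succ_apply (j : Fin n) (k : Fin n → ℕ) :
    star (w j.succ) (enBasis n k) =
      (shiftWeight q j k (k (shiftIdx j)) : ℂ) • enBasis n (decr k (shiftIdx j)) := by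
  rw [star_eq_adjoint]
  by_cases hk : k (shiftIdx j) = 0
  · rw [hk, shiftWeight_exponent_zero, Complex.ofReal_zero, zero_smul]
    refine adjoint_weightedShift_apply_of_notMem_range (hw.succ_apply j) ?_
    rintro ⟨l, rfl⟩
    simp [incr] at hk
  · obtain ⟨l, rfl⟩ : ∃ l, incr l (shiftIdx j) = k := ⟨_, incr_decr hk⟩
    rw [adjoint_weightedShift_apply (incr_injective _) (hw.succ_apply j), decr_incr,
      Complex.star_def, Complex.conj_ofReal, shiftWeight, shiftWeight, headDegree_incr_shiftIdx]
    simp [incr]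

theorem isCompactOperator_zero (hq : 1 < q) : IsCompactOperator (w 0) := by
  refine isCompactOperator_of_weightedShift Function.injective_id hw.zero_apply ?_
  exact (Complex.continuous_ofReal.tendsto' 0 0 Complex.ofReal_zero).comp
    (tendsto_pow_sum_cofinite (inv_nonneg.2 (zero_le_one.trans hq.le)) (inv_lt_one_of_one_lt₀ hq))

end IsWFamily

end Generators

section CompactsInProjAlg

theorem exists_shiftIdx_eq {n : ℕ} (i : Fin n) : ∃ j, shiftIdx j = i :=
  ⟨shiftIdx i, shiftIdx_shiftIdx i⟩

theorem star_mul_mem_projAlg {n : ℕ} (w : Fin (n + 1) → (Hn n →L[ℂ] Hn n)) (i j : Fin (n + 1)) :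
    star (w i) * w j ∈ projAlg w :=
  StarSubalgebra.le_topologicalClosure _ (StarAlgebra.subset_adjoin ℂ _ ⟨i, j, rfl⟩)

theorem isClosed_projAlg {n : ℕ} (w : Fin (n + 1) → (Hn n →L[ℂ] Hn n)) :
    IsClosed (projAlg w : Set (Hn n →L[ℂ] Hn n)) :=
  StarSubalgebra.isClosed_topologicalClosure _

namespace IsWFamily

variable {q : ℝ} {n : ℕ} {w : Fin (n + 1) → (Hn n →L[ℂ] Hn n)} (hw : IsWFamily q w) (hq : 1 < q)
include hw hq

theorem rankOne_vacuum_mem_projAlg : rankOne ℂ (enBasis n 0) (enBasis n 0) ∈ projAlg w := by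
  have hq0 : 0 ≤ q⁻¹ := inv_nonneg.2 (zero_le_one.trans hq.le)
  have hq1 : q⁻¹ < 1 := inv_lt_one_of_one_lt₀ hq
  have hdiag : ∀ k, (star (w 0) * w 0) (enBasis n k) =
      (((q⁻¹ ^ ∑ m, k m) ^ 2 : ℝ) : ℂ) • enBasis n k := fun k => by
    rw [mul_apply_eq_comp, hw.zero_apply, map_smul, hw.star_zero_apply, smul_smul, sq,
      Complex.ofReal_mul]
  refine (isClosed_projAlg w).mem_of_tendsto
    (tendsto_pow_of_diagonal hdiag (i₀ := 0) (by simp) hq0 hq1 fun k hk => ?_)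
    (Eventually.of_forall fun N => pow_mem (star_mul_mem_projAlg w 0 0) N)
  have hdeg : ∑ m, k m ≠ 0 := fun h => hk (funext fun m => Finset.sum_eq_zero_iff.1 h m (by simp))
  rw [← pow_mul, Complex.norm_real, Real.norm_of_nonneg (pow_nonneg hq0 _)]
  exact pow_le_of_le_one hq0 hq1.le (by omega)

theorem rankOne_basis_vacuum_mem_projAlg (k : Fin n → ℕ) :
    rankOne ℂ (enBasis n k) (enBasis n 0) ∈ projAlg w := by
  induction k using multiIndex_induction with
  | zero => exact hw.rankOne_vacuum_mem_projAlg hq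
  | incr k i ih =>
    obtain ⟨j, rfl⟩ := exists_shiftIdx_eq i
    set z : ℂ := (shiftWeight q j k (k (shiftIdx j) + 1) : ℂ) *
      ((q⁻¹ ^ ∑ m, incr k (shiftIdx j) m : ℝ) : ℂ)
    have hz0 : z ≠ 0 := mul_ne_zero (Complex.ofReal_ne_zero.2 (shiftWeight_ne_zero hq j k _))
      (Complex.ofReal_ne_zero.2 (pow_ne_zero _ (inv_ne_zero (zero_lt_one.trans hq).ne')))
    have happly : (star (w 0) * w j.succ) (enBasis n k) = z • enBasis n (incr k (shiftIdx j)) := by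
      rw [mul_apply_eq_comp, hw.succ_apply, map_smul, hw.star_zero_apply, smul_smul]
    have hrank : rankOne ℂ (enBasis n (incr k (shiftIdx j))) (enBasis n 0) =
        z⁻¹ • ((star (w 0) * w j.succ) * rankOne ℂ (enBasis n k) (enBasis n 0)) := by
      rw [mul_def _ (rankOne ℂ _ _), comp_rankOne, happly, map_smul, smul_apply,
        inv_smul_smul₀ hz0]
    rw [hrank]
    exact (projAlg w).smul_mem (mul_mem (star_mul_mem_projAlg w 0 j.succ) ih) _

theorem mem_projAlg_of_isCompactOperator {T : Hn n →L[ℂ] Hn n} (hT : IsCompactOperator T) :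
    T ∈ projAlg w :=
  mem_of_isCompactOperator_of_rankOne_basis_mem (enBasis n) (isClosed_projAlg w)
    ((enBasis n).orthonormal.norm_eq_one 0) (hw.rankOne_basis_vacuum_mem_projAlg hq) hT

end IsWFamily

end CompactsInProjAlg

section Slicing

/-- The basis of `ℓ²(ℤ; H_n)` made of copies of the standard basis of `H_n`. -/
abbrev slicedBasis (n : ℕ) : HilbertBasis (ℤ × (Fin n → ℕ)) ℂ (lp (fun _ : ℤ => Hn n) 2) :=
  hilbertSumBasis ℤ (enBasis n)

/-- The degree and the first `n` entries of a multi-index, which together determine it. -/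
def degreeInit (n : ℕ) : (Fin (n + 1) → ℕ) ↪ ℤ × (Fin n → ℕ) where
  toFun m := ((∑ i, m i : ℕ), Fin.init m)
  inj' m m' h := by
    obtain ⟨hdeg, hinit⟩ := Prod.ext_iff.1 h
    have hlast : m (Fin.last n) = m' (Fin.last n) := by
      have hsum : ∀ i : Fin n, m i.castSucc = m' i.castSucc := congrFun hinit
      simpa [Fin.sum_univ_castSucc, hsum] using hdeg
    rw [← Fin.snoc_init_self m, ← Fin.snoc_init_self m', hlast, show Fin.init m = _ from hinit]

/-- The isometry that places the span of the `e_m` with `|m| = d` in the `d`-th summand of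
`ℓ²(ℤ; H_n)`, forgetting the last entry of `m`. -/
def degreeSlicing (n : ℕ) : Hn (n + 1) →L[ℂ] lp (fun _ : ℤ => Hn n) 2 :=
  basisIsometry (enBasis (n + 1)) (slicedBasis n) (degreeInit n)

/-- The bilateral shift `c_{(d,k)} ↦ c_{(d+1,k)}` of `ℓ²(ℤ; H_n)`. -/
def levelShift (n : ℕ) : lp (fun _ : ℤ => Hn n) 2 →L[ℂ] lp (fun _ : ℤ => Hn n) 2 :=
  basisIsometry (slicedBasis n) (slicedBasis n)
    ((Equiv.addRight (1 : ℤ)).prodCongr (Equiv.refl _)).toEmbedding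

variable {n : ℕ}

theorem degreeSlicing_basis (m : Fin (n + 1) → ℕ) :
    degreeSlicing n (enBasis (n + 1) m) = slicedBasis n ((∑ i, m i : ℕ), Fin.init m) :=
  basisIsometry_basis _ _ _ m

theorem levelShift_basis (d : ℤ) (k : Fin n → ℕ) :
    levelShift n (slicedBasis n (d, k)) = slicedBasis n (d + 1, k) :=
  basisIsometry_basis _ _ _ (d, k)

theorem star_levelShift_basis (d : ℤ) (k : Fin n → ℕ) :
    star (levelShift n) (slicedBasis n (d, k)) = slicedBasis n (d - 1, k) := by
  have h := adjoint_basisIsometry_basis (slicedBasis n) (slicedBasis n)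
    ((Equiv.addRight (1 : ℤ)).prodCongr (Equiv.refl _)).toEmbedding (d - 1, k)
  simpa [levelShift, star_eq_adjoint] using h

theorem star_levelShift_mul_self : star (levelShift n) * levelShift n = 1 :=
  adjoint_comp_basisIsometry _ _ _

theorem degreeSlicing_incr (m : Fin (n + 1) → ℕ) (i : Fin (n + 1)) :
    degreeSlicing n (enBasis (n + 1) (incr m i)) =
      slicedBasis n ((∑ i, m i : ℕ) + 1, Fin.init (incr m i)) := by
  rw [degreeSlicing_basis, sum_incr, Nat.cast_add_one]

-- When `m i = 0` the degree of `decr m i` is not `|m| - 1`, but the weight vanishes.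
theorem shiftWeight_smul_degreeSlicing_decr (q : ℝ) (j : Fin (n + 1)) (m : Fin (n + 1) → ℕ)
    (i : Fin (n + 1)) :
    (shiftWeight q j m (m i) : ℂ) • degreeSlicing n (enBasis (n + 1) (decr m i)) =
      (shiftWeight q j m (m i) : ℂ) •
        slicedBasis n ((∑ i, m i : ℕ) - 1, Fin.init (decr m i)) := by
  by_cases hi : m i = 0
  · simp only [hi, shiftWeight_exponent_zero, Complex.ofReal_zero, zero_smul]
  · have hsum := sum_incr (decr m i) i
    rw [incr_decr hi] at hsum
    rw [degreeSlicing_basis, hsum, Nat.cast_add_one, add_sub_cancel_right]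

theorem isCompactOperator_of_degreeSlicing_weights {q : ℝ} (hq : 1 < q) (s : ℤ)
    {A : Hn (n + 1) →L[ℂ] lp (fun _ : ℤ => Hn n) 2} {a : (Fin (n + 1) → ℕ) → ℝ}
    (hA : ∀ m, A (enBasis (n + 1) m) = (a m : ℂ) • slicedBasis n ((∑ i, m i : ℕ) + s, Fin.init m))
    (ha : ∀ m, |a m| ≤ q⁻¹ ^ ∑ i, m i) : IsCompactOperator A := by
  refine isCompactOperator_of_weightedShift
    (f := fun m => ((degreeInit n m).1 + s, (degreeInit n m).2)) (fun m m' h => ?_) hA ?_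
  · simp only [Prod.mk.injEq, add_left_inj] at h
    exact (degreeInit n).injective (Prod.ext h.1 h.2)
  · refine squeeze_zero_norm (fun m => ?_) (tendsto_pow_sum_cofinite
      (inv_nonneg.2 (zero_le_one.trans hq.le)) (inv_lt_one_of_one_lt₀ hq))
    simpa using ha m

end Slicing

section QuotientByCompacts

variable {q : ℝ} {n : ℕ} {w : Fin (n + 2) → (Hn (n + 1) →L[ℂ] Hn (n + 1))}
  {w' : Fin (n + 1) → (Hn n →L[ℂ] Hn n)}

theorem degreeSlicing_comp_succ_succ (hw : IsWFamily q w) (hw' : IsWFamily q w') (i : Fin n) :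
    degreeSlicing n ∘L w i.succ.succ =
      (levelShift n * ampliation ℂ (Hn n) ℤ (w' i.succ)) ∘L degreeSlicing n := by
  refine clm_ext_hilbertBasis (enBasis (n + 1)) fun m => ?_
  simp only [comp_apply, mul_apply_eq_comp]
  rw [hw.succ_apply, map_smul, degreeSlicing_incr, degreeSlicing_basis,
    ampliation_hilbertSumBasis (hw'.succ_apply i _), map_smul, levelShift_basis, shiftWeight_succ,
    shiftIdx_succ, init_incr_castSucc]
  rfl

theorem degreeSlicing_comp_star_succ_succ (hw : IsWFamily q w) (hw' : IsWFamily q w')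
    (i : Fin n) :
    degreeSlicing n ∘L star (w i.succ.succ) =
      star (levelShift n * ampliation ℂ (Hn n) ℤ (w' i.succ)) ∘L degreeSlicing n := by
  refine clm_ext_hilbertBasis (enBasis (n + 1)) fun m => ?_
  simp only [star_mul, ← map_star, comp_apply, mul_apply_eq_comp]
  rw [hw.star_succ_apply, map_smul, shiftWeight_smul_degreeSlicing_decr, degreeSlicing_basis,
    star_levelShift_basis, ampliation_hilbertSumBasis (hw'.star_succ_apply i _), shiftWeight_succ,
    shiftIdx_succ, init_decr_castSucc]
  rfl

theorem isCompactOperator_degreeSlicing_comp_one_sub (hq : 1 < q) (hw : IsWFamily q w)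
    (hw' : IsWFamily q w') :
    IsCompactOperator (degreeSlicing n ∘L w (Fin.succ 0) -
      (levelShift n * ampliation ℂ (Hn n) ℤ (w' 0)) ∘L degreeSlicing n) := by
  refine isCompactOperator_of_degreeSlicing_weights hq 1 (fun m => ?_) fun m =>
    abs_shiftWeight_zero_sub_le hq (Nat.le_succ (m (Fin.last n)))
  simp only [sub_apply, comp_apply, mul_apply_eq_comp]
  rw [hw.succ_apply, map_smul, degreeSlicing_incr, degreeSlicing_basis,
    ampliation_hilbertSumBasis (hw'.zero_apply _), map_smul, levelShift_basis, shiftIdx_zero,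
    init_incr_last, ← sub_smul, Complex.ofReal_sub]

theorem isCompactOperator_degreeSlicing_comp_star_one_sub (hq : 1 < q) (hw : IsWFamily q w)
    (hw' : IsWFamily q w') :
    IsCompactOperator (degreeSlicing n ∘L star (w (Fin.succ 0)) -
      star (levelShift n * ampliation ℂ (Hn n) ℤ (w' 0)) ∘L degreeSlicing n) := by
  refine isCompactOperator_of_degreeSlicing_weights hq (-1) (fun m => ?_) fun m =>
    abs_shiftWeight_zero_sub_le hq (le_refl (m (Fin.last n)))
  simp only [star_mul, ← map_star, sub_apply, comp_apply, mul_apply_eq_comp]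
  rw [hw.star_succ_apply, map_smul, shiftWeight_smul_degreeSlicing_decr, degreeSlicing_basis,
    star_levelShift_basis, ampliation_hilbertSumBasis (hw'.star_zero_apply _), shiftIdx_zero,
    init_decr_last, ← sub_smul, Complex.ofReal_sub]
  rfl

theorem succ_mem_essIntertwined (hq : 1 < q) (hw : IsWFamily q w) (hw' : IsWFamily q w')
    (j : Fin (n + 1)) :
    (w j.succ, levelShift n * ampliation ℂ (Hn n) ℤ (w' j)) ∈
      essIntertwined (degreeSlicing n) := by
  refine mem_essIntertwined.2 ?_
  cases j using Fin.cases with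
  | zero => exact ⟨isCompactOperator_degreeSlicing_comp_one_sub hq hw hw',
      isCompactOperator_degreeSlicing_comp_star_one_sub hq hw hw'⟩
  | succ i =>
    have h := degreeSlicing_comp_star_succ_succ hw hw' i
    rw [star_eq_adjoint, star_eq_adjoint] at h
    rw [degreeSlicing_comp_succ_succ hw hw' i, h, sub_self, sub_self]
    exact ⟨isCompactOperator_zero, isCompactOperator_zero⟩

theorem star_succ_mul_succ_mem_essIntertwined (hq : 1 < q) (hw : IsWFamily q w)
    (hw' : IsWFamily q w') (i j : Fin (n + 1)) :
    (star (w i.succ) * w j.succ, ampliation ℂ (Hn n) ℤ (star (w' i) * w' j)) ∈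
      essIntertwined (degreeSlicing n) := by
  have h := mul_mem (star_mem (succ_mem_essIntertwined hq hw hw' i))
    (succ_mem_essIntertwined hq hw hw' j)
  have hcancel : star (levelShift n * ampliation ℂ (Hn n) ℤ (w' i)) *
      (levelShift n * ampliation ℂ (Hn n) ℤ (w' j)) =
        ampliation ℂ (Hn n) ℤ (star (w' i) * w' j) := by
    rw [star_mul, mul_assoc, ← mul_assoc (star (levelShift n)), star_levelShift_mul_self, one_mul,
      map_mul, map_star]
  rw [← hcancel]
  exact h

theorem star_mul_mem_essIntertwined_zero (hq : 1 < q) (hw : IsWFamily q w) {i j : Fin (n + 2)}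
    (h : i = 0 ∨ j = 0) : (star (w i) * w j, 0) ∈ essIntertwined (degreeSlicing n) := by
  have h₀ := hw.isCompactOperator_zero hq
  refine mk_zero_mem_essIntertwined _ ?_
  rcases h with rfl | rfl
  · exact (isCompactOperator_adjoint h₀).comp_clm (w j)
  · exact h₀.clm_comp (star (w i))

theorem inner_compression_ampliation (z : Hn n →L[ℂ] Hn n) {m l : Fin (n + 1) → ℕ}
    (hml : ∑ i, m i = ∑ i, l i) :
    ⟪enBasis (n + 1) l, compression (degreeSlicing n) (ampliation ℂ (Hn n) ℤ z)
      (enBasis (n + 1) m)⟫_ℂ = ⟪enBasis n (Fin.init l), z (enBasis n (Fin.init m))⟫_ℂ := by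
  change ⟪_, ((degreeSlicing n)†) (ampliation ℂ (Hn n) ℤ z (degreeSlicing n _))⟫_ℂ = _
  rw [adjoint_inner_right, degreeSlicing_basis, degreeSlicing_basis, hml, hilbertSumBasis_apply,
    hilbertSumBasis_apply, ampliation_single, lp.inner_single_left, lp.single_apply_self]

-- The matrix coefficients of `z` recur along the last coordinate, while those of a compact
-- operator tend to zero.
theorem eq_zero_of_isCompactOperator_compression_ampliation {z : Hn n →L[ℂ] Hn n}
    (hz : IsCompactOperator (compression (degreeSlicing n) (ampliation ℂ (Hn n) ℤ z))) :
    z = 0 := by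
  have hcoeff : ∀ k l, ⟪enBasis n l, z (enBasis n k)⟫_ℂ = 0 := by
    intro k l
    have hinj : Function.Injective fun N => (Fin.snoc k (N + ∑ i, l i) : Fin (n + 1) → ℕ) :=
      fun N N' h => by simpa using congrFun h (Fin.last n)
    have hlim := (tendsto_norm_apply_cofinite_of_isCompactOperator (enBasis (n + 1)) hz).comp
      hinj.tendsto_cofinite
    refine norm_le_zero_iff.1 (ge_of_tendsto' hlim fun N => ?_)
    have hdeg : ∑ i, (Fin.snoc k (N + ∑ i, l i) : Fin (n + 1) → ℕ) i =
        ∑ i, (Fin.snoc l (N + ∑ i, k i) : Fin (n + 1) → ℕ) i := by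
      simp only [Fin.sum_univ_castSucc, Fin.snoc_castSucc, Fin.snoc_last]
      omega
    have hinner := inner_compression_ampliation z hdeg
    rw [Fin.init_snoc, Fin.init_snoc] at hinner
    rw [← hinner]
    refine (norm_inner_le_norm (𝕜 := ℂ) _ _).trans ?_
    rw [(enBasis (n + 1)).orthonormal.1, one_mul]
    rfl
  refine clm_ext_hilbertBasis (enBasis n) fun k => ?_
  refine (enBasis n).repr.map_eq_zero_iff.1 (lp.ext (funext fun l => ?_))
  rw [(enBasis n).repr_apply_apply, hcoeff]
  rfl

end QuotientByCompacts

/-- For every `k ≥ 1` (here `k = n+1`) and real `q > 1`: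
(a) every compact operator on `H_k = ℓ²(ℕᵏ)` belongs to `B_k(q)`; and
(b) there is a surjective unital *-homomorphism `φ : B_k(q) → B_{k-1}(q)` whose kernel is
exactly the set of compact operators on `H_k`.  Equivalently, there is a short exact
sequence `0 → K → C(ℂP_q^k) → C(ℂP_q^{k-1}) → 0` (with `C(ℂP_q^0) ≅ ℂ`). -/
theorem stmt_1 (n : ℕ) (q : ℝ) (hq : 1 < q)
    (w : Fin (n + 2) → (Hn (n + 1) →L[ℂ] Hn (n + 1)))
    (w' : Fin (n + 1) → (Hn n →L[ℂ] Hn n))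
    (hw : IsWFamily q w) (hw' : IsWFamily q w') :
    (∀ T : Hn (n + 1) →L[ℂ] Hn (n + 1), IsCompactOperator ⇑T → T ∈ projAlg w) ∧
    ∃ φ : (projAlg w) →⋆ₐ[ℂ] (projAlg w'),
      Function.Surjective φ ∧
      ∀ x : projAlg w, φ x = 0 ↔ IsCompactOperator ⇑(x : Hn (n + 1) →L[ℂ] Hn (n + 1)) := by
  have hcompact := fun T => hw.mem_projAlg_of_isCompactOperator hq (T := T)
  refine ⟨hcompact, exists_surjective_starAlgHom_ker_compact (V := degreeSlicing n)
    (ρ := ampliation ℂ (Hn n) ℤ) (adjoint_comp_basisIsometry _ _ _)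
    (fun _ => eq_zero_of_isCompactOperator_compression_ampliation) hcompact ?_ ?_⟩
  · rintro _ ⟨i, j, rfl⟩
    by_cases h : i = 0 ∨ j = 0
    · refine ⟨0, zero_mem _, ?_⟩
      rw [map_zero]
      exact star_mul_mem_essIntertwined_zero hq hw h
    · obtain ⟨hi, hj⟩ := not_or.1 h
      obtain ⟨i, rfl⟩ := Fin.exists_succ_eq.2 hi
      obtain ⟨j, rfl⟩ := Fin.exists_succ_eq.2 hj
      exact ⟨_, star_mul_mem_projAlg w' i j, star_succ_mul_succ_mem_essIntertwined hq hw hw' i j⟩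
  · rintro _ ⟨i, j, rfl⟩
    exact ⟨_, star_mul_mem_projAlg w i.succ j.succ,
      star_succ_mul_succ_mem_essIntertwined hq hw hw' i j⟩
end
end
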